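/- arXiv:2508.11556 — 12 statements merged into one kernel-verified Lean document; each statement's English description precedes it below -/
import Mathlib

section
/- Suppose y₁, y₂ ∈ {0,1}^T satisfy W y₁ = W y₂, and set z := Σ_{t=1}^T (y₁ₜ − y₂ₜ) · (xₜᵀβ). Then for every A ∈ ℝ^{d_w}, P_{β,A}(y₁ | X) / ( P_{β,A}(y₁ | X) + P_{β,A}(y₂ | X) ) = exp(z) / (1 + exp(z)); in particular the conditional probability of y₁ given the outcome lies in {y₁, y₂} does not depend on A. -/
/-- The static logit probability of outcome `y ∈ {0,1}^T`:
`P_{β,A}(y | X) = ∏_t exp(y_t (x_tᵀβ + w_tᵀA)) / (1 + exp(x_tᵀβ + w_tᵀA))`. -/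
noncomputable def staticLogitP {T dw dx : ℕ}
    (w : Fin T → Fin dw → ℝ) (x : Fin T → Fin dx → ℝ)
    (β : Fin dx → ℝ) (A : Fin dw → ℝ) (y : Fin T → ℝ) : ℝ :=
  ∏ t, Real.exp (y t * ((∑ i, x t i * β i) + ∑ k, w t k * A k)) /
      (1 + Real.exp ((∑ i, x t i * β i) + ∑ k, w t k * A k))

/-- The joint probability as the exponential of the total index over a normalizing constant. -/
lemma staticLogitP_eq_exp_sum_div {T dw dx : ℕ}
    (w : Fin T → Fin dw → ℝ) (x : Fin T → Fin dx → ℝ)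
    (β : Fin dx → ℝ) (A : Fin dw → ℝ) (y : Fin T → ℝ) :
    staticLogitP w x β A y =
      Real.exp (∑ t, y t * (∑ i, x t i * β i) + ∑ k, (∑ t, w t k * y t) * A k) /
        ∏ t, (1 + Real.exp ((∑ i, x t i * β i) + ∑ k, w t k * A k)) := by
  have hsum : ∑ k, (∑ t, w t k * y t) * A k = ∑ t, y t * ∑ k, w t k * A k := by
    simp only [Finset.sum_mul, Finset.mul_sum]
    rw [Finset.sum_comm]
    exact Finset.sum_congr rfl fun t _ => Finset.sum_congr rfl fun k _ => by ring
  rw [staticLogitP, Finset.prod_div_distrib, ← Real.exp_sum, hsum, ← Finset.sum_add_distrib]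
  simp only [mul_add]

/-- The odds of two outcomes with `W y₁ = W y₂` are free of the fixed effect `A`. -/
lemma staticLogitP_eq_exp_mul {T dw dx : ℕ}
    (w : Fin T → Fin dw → ℝ) (x : Fin T → Fin dx → ℝ)
    (β : Fin dx → ℝ) (A : Fin dw → ℝ) (y₁ y₂ : Fin T → ℝ)
    (hW : ∀ k, ∑ t, w t k * y₁ t = ∑ t, w t k * y₂ t) :
    staticLogitP w x β A y₁ =
      Real.exp (∑ t, (y₁ t - y₂ t) * (∑ i, x t i * β i)) * staticLogitP w x β A y₂ := by
  rw [staticLogitP_eq_exp_sum_div, staticLogitP_eq_exp_sum_div, ← mul_div_assoc, ← Real.exp_add]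
  simp only [hW, sub_mul, Finset.sum_sub_distrib]
  ring_nf

lemma staticLogitP_pos {T dw dx : ℕ}
    (w : Fin T → Fin dw → ℝ) (x : Fin T → Fin dx → ℝ)
    (β : Fin dx → ℝ) (A : Fin dw → ℝ) (y : Fin T → ℝ) :
    0 < staticLogitP w x β A y :=
  Finset.prod_pos fun _ _ => by positivity

/-- If `y₁, y₂ ∈ {0,1}^T` satisfy `W y₁ = W y₂` and
`z = Σ_t (y₁ₜ - y₂ₜ)(x_tᵀβ)`, then for every `A`,
`P_{β,A}(y₁|X) / (P_{β,A}(y₁|X) + P_{β,A}(y₂|X)) = exp z / (1 + exp z)`;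
in particular the conditional probability of `y₁` given `{y₁,y₂}` does not depend on `A`. -/
theorem stmt2 {T dw dx : ℕ} (hT : 1 ≤ T) (hdw : 1 ≤ dw) (hdx : 1 ≤ dx)
    (w : Fin T → Fin dw → ℝ) (x : Fin T → Fin dx → ℝ) (β : Fin dx → ℝ)
    (y₁ y₂ : Fin T → ℝ)
    (hy₁ : ∀ t, y₁ t = 0 ∨ y₁ t = 1) (hy₂ : ∀ t, y₂ t = 0 ∨ y₂ t = 1)
    (hW : ∀ k, ∑ t, w t k * y₁ t = ∑ t, w t k * y₂ t)
    (z : ℝ) (hz : z = ∑ t, (y₁ t - y₂ t) * (∑ i, x t i * β i)) :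
    ∀ A : Fin dw → ℝ,
      staticLogitP w x β A y₁ / (staticLogitP w x β A y₁ + staticLogitP w x β A y₂) =
        Real.exp z / (1 + Real.exp z) := by
  intro A
  have hpos := staticLogitP_pos w x β A y₂
  rw [staticLogitP_eq_exp_mul w x β A y₁ y₂ hW, ← hz, ← add_one_mul,
    mul_div_mul_right _ _ hpos.ne', add_comm]
end

section
/- Let y, ỹ ∈ {0,1}^T be two outcome sequences such that: (i) Σ_{t=1}^T w_t y_t = Σ_{t=1}^T w_t ỹ_t in ℝ^{d_w}; and (ii) the multiset of pairs { (w_t, π_t(y_{t−1},…,y_1)) : t = 2,…,T } equals the multiset { (w_t, π_t(ỹ_{t−1},…,ỹ_1)) : t = 2,…,T }. Then for every A ∈ ℝ^{d_w}, P(y | A) / P(ỹ | A) = exp( Σ_{t=1}^T [ y_t π_t(y_{t−1},…,y_1) − ỹ_t π_t(ỹ_{t−1},…,ỹ_1) ] ); in particular this ratio does not depend on A. -/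
/-- The history `(y_{t-1},…,y_1)` of an outcome sequence `y` before time `t`
(0-indexed: the restriction of `y` to indices `< t`). -/
def hist {T : ℕ} (y : Fin T → ℝ) (t : Fin T) : Fin t.val → ℝ :=
  fun s => y ⟨s.val, s.isLt.trans t.isLt⟩

/-- The dynamic logit probability of `y ∈ {0,1}^T` given the fixed effect `A`:
`P(y | A) = ∏_t exp(y_t (π_t(y^{t-1}) + w_tᵀA)) / (1 + exp(π_t(y^{t-1}) + w_tᵀA))`. -/
noncomputable def dynLogitP {T dw : ℕ}
    (w : Fin T → Fin dw → ℝ) (π : (t : Fin T) → (Fin t.val → ℝ) → ℝ)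
    (A : Fin dw → ℝ) (y : Fin T → ℝ) : ℝ :=
  ∏ t, Real.exp (y t * (π t (hist y t) + ∑ k, w t k * A k)) /
      (1 + Real.exp (π t (hist y t) + ∑ k, w t k * A k))

/-- The numerator of the logit probability separates into a part free of `A` and a part that
depends on `y` only through `Σ_t w_t y_t`. -/
theorem dynLogitP_eq_exp_div {T dw : ℕ}
    (w : Fin T → Fin dw → ℝ) (π : (t : Fin T) → (Fin t.val → ℝ) → ℝ)
    (A : Fin dw → ℝ) (y : Fin T → ℝ) :
    dynLogitP w π A y =
      Real.exp (∑ t, y t * π t (hist y t)) * Real.exp (∑ k, (∑ t, w t k * y t) * A k) /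
        ∏ t, (1 + Real.exp (π t (hist y t) + ∑ k, w t k * A k)) := by
  have hsum : ∑ k, (∑ t, w t k * y t) * A k = ∑ t, y t * ∑ k, w t k * A k := by
    simp_rw [Finset.sum_mul, Finset.mul_sum]
    rw [Finset.sum_comm]
    exact Finset.sum_congr rfl fun t _ => Finset.sum_congr rfl fun k _ => by ring
  rw [dynLogitP, Finset.prod_div_distrib, ← Real.exp_sum, ← Real.exp_add, hsum,
    ← Finset.sum_add_distrib]
  simp_rw [mul_add]

/-- At the initial time every history is empty. -/
theorem hist_eq_of_val_eq_zero {T : ℕ} (y y' : Fin T → ℝ) {t : Fin T} (ht : t.val = 0) :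
    hist y t = hist y' t :=
  funext fun s => absurd s.isLt (by omega)

/-- The denominator of the logit probability depends on `y` only through the multiset of pairs
`(w_t, π_t(y^{t-1}))` over the non-initial times. -/
theorem prod_one_add_exp_eq_of_map_eq {T dw : ℕ}
    (w : Fin T → Fin dw → ℝ) (π : (t : Fin T) → (Fin t.val → ℝ) → ℝ)
    (A : Fin dw → ℝ) (y y' : Fin T → ℝ)
    (h : ((Finset.univ.filter (fun t : Fin T => t.val ≠ 0)).val.map
            (fun t => (w t, π t (hist y t)))) =
          ((Finset.univ.filter (fun t : Fin T => t.val ≠ 0)).val.map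
            (fun t => (w t, π t (hist y' t))))) :
    ∏ t, (1 + Real.exp (π t (hist y t) + ∑ k, w t k * A k)) =
      ∏ t, (1 + Real.exp (π t (hist y' t) + ∑ k, w t k * A k)) := by
  rw [← Finset.prod_filter_mul_prod_filter_not Finset.univ (fun t : Fin T => t.val ≠ 0),
    ← Finset.prod_filter_mul_prod_filter_not Finset.univ (fun t : Fin T => t.val ≠ 0)
      (fun t => 1 + Real.exp (π t (hist y' t) + ∑ k, w t k * A k))]
  congr 1
  · have := congrArg (fun m => (m.map fun p : (Fin dw → ℝ) × ℝ =>
      1 + Real.exp (p.2 + ∑ k, p.1 k * A k)).prod) h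
    simp only [Multiset.map_map] at this
    exact this
  · refine Finset.prod_congr rfl fun t ht => ?_
    rw [hist_eq_of_val_eq_zero y y' (not_not.mp (Finset.mem_filter.mp ht).2)]

/-- Let `y, y' ∈ {0,1}^T` satisfy (i) `Σ_t w_t y_t = Σ_t w_t y'_t` and
(ii) the multiset `{(w_t, π_t(y^{t-1})) : t = 2,…,T}` equals the multiset
`{(w_t, π_t(y'^{t-1})) : t = 2,…,T}`. Then for every `A ∈ ℝ^{d_w}`,
`P(y|A)/P(y'|A) = exp(Σ_t [y_t π_t(y^{t-1}) - y'_t π_t(y'^{t-1})])`;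
in particular the ratio does not depend on `A`. -/
theorem stmt4 {T dw : ℕ} (hT : 1 ≤ T) (hdw : 1 ≤ dw)
    (w : Fin T → Fin dw → ℝ) (π : (t : Fin T) → (Fin t.val → ℝ) → ℝ)
    (y y' : Fin T → ℝ)
    (hy : ∀ t, y t = 0 ∨ y t = 1) (hy' : ∀ t, y' t = 0 ∨ y' t = 1)
    (h1 : ∀ k, ∑ t, w t k * y t = ∑ t, w t k * y' t)
    (h2 : ((Finset.univ.filter (fun t : Fin T => t.val ≠ 0)).val.map
            (fun t => (w t, π t (hist y t)))) =
          ((Finset.univ.filter (fun t : Fin T => t.val ≠ 0)).val.map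
            (fun t => (w t, π t (hist y' t))))) :
    ∀ A : Fin dw → ℝ,
      dynLogitP w π A y / dynLogitP w π A y' =
        Real.exp (∑ t, (y t * π t (hist y t) - y' t * π t (hist y' t))) := by
  intro A
  have hden : ∏ t, (1 + Real.exp (π t (hist y' t) + ∑ k, w t k * A k)) ≠ 0 :=
    Finset.prod_ne_zero_iff.mpr fun t _ => by positivity
  rw [dynLogitP_eq_exp_div, dynLogitP_eq_exp_div, prod_one_add_exp_eq_of_map_eq w π A y y' h2,
    div_div_div_cancel_right₀ hden]
  simp_rw [h1]
  rw [mul_div_mul_right _ _ (Real.exp_ne_zero _), ← Real.exp_sub, Finset.sum_sub_distrib]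
end

section
/- Suppose each weight vector w_t ∈ ℝ^{d_w} (t = 1,…,T) is a standard basis vector, say w_t = e_{j_t} with j_t ∈ {1,…,d_w}. Let y_0 ∈ {0,1} be fixed and let y, ỹ ∈ {0,1}^T (with the convention ỹ_0 := y_0) satisfy Σ_{t=1}^T w_t y_t = Σ_{t=1}^T w_t ỹ_t and Σ_{t=1}^T w_t y_{t−1} = Σ_{t=1}^T w_t ỹ_{t−1}. Then the multiset of pairs { (j_t, y_{t−1}) : t = 2,…,T } equals the multiset { (j_t, ỹ_{t−1}) : t = 2,…,T }. -/
/-- The lagged outcome `y_{t-1}` (with fixed initial value `y₀` at `t = 1`),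
0-indexed in `t`. -/
def ylag {T : ℕ} (y0 : ℝ) (y : Fin T → ℝ) (t : Fin T) : ℝ :=
  if t.val = 0 then y0
  else y ⟨t.val - 1, lt_of_le_of_lt (Nat.sub_le _ _) t.isLt⟩

/-- If two `0`/`1`-valued functions have the same sum over every fibre of `j`, then pairing
them with `j` gives the same multiset. -/
theorem map_prodMk_eq_of_sum_fiber_eq {ι κ : Type*} [DecidableEq κ] (s : Finset ι) (j : ι → κ)
    (f g : ι → ℝ) (hf : ∀ t ∈ s, f t = 0 ∨ f t = 1) (hg : ∀ t ∈ s, g t = 0 ∨ g t = 1)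
    (h : ∀ k, ∑ t ∈ s, (if j t = k then f t else 0) = ∑ t ∈ s, (if j t = k then g t else 0)) :
    s.val.map (fun t => (j t, f t)) = s.val.map (fun t => (j t, g t)) := by
  classical
  have count_eq : ∀ u : ι → ℝ, (∀ t ∈ s, u t = 0 ∨ u t = 1) → ∀ (k : κ) (a : ℝ),
      ((s.val.map (fun t => (j t, u t))).count (k, a) : ℝ) =
        (∑ t ∈ s, if j t = k then (if a = 0 then 1 else 0 : ℝ) else 0) +
        ((if a = 1 then 1 else 0) - (if a = 0 then 1 else 0)) *
          ∑ t ∈ s, (if j t = k then u t else 0) := by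
    intro u hu k a
    rw [Multiset.count_map, ← Finset.filter_val, Finset.card_val, Finset.card_filter,
      Finset.mul_sum, ← Finset.sum_add_distrib]
    push_cast
    refine Finset.sum_congr rfl fun t ht => ?_
    by_cases hk : j t = k
    · rcases hu t ht with h0 | h0 <;> simp [hk, h0]
    · simp [hk, Ne.symm hk]
  ext ⟨k, a⟩
  rw [← Nat.cast_inj (R := ℝ), count_eq f hf, count_eq g hg, h k]

theorem ylag_eq_zero_or_one {T : ℕ} {y0 : ℝ} (hy0 : y0 = 0 ∨ y0 = 1) {y : Fin T → ℝ}
    (hy : ∀ t, y t = 0 ∨ y t = 1) (t : Fin T) : ylag y0 y t = 0 ∨ ylag y0 y t = 1 := by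
  unfold ylag
  split_ifs
  exacts [hy0, hy _]

/-- Suppose each weight vector `w_t` is a standard basis vector
`e_{j_t}` of `ℝ^{d_w}`. If the binary sequences `y, y'` (with common initial value
`y₀`) satisfy `Σ_t w_t y_t = Σ_t w_t y'_t` and `Σ_t w_t y_{t-1} = Σ_t w_t y'_{t-1}`,
then the multiset `{(j_t, y_{t-1}) : t = 2,…,T}` equals the multiset
`{(j_t, y'_{t-1}) : t = 2,…,T}`. -/
theorem stmt5 {T dw : ℕ} (hT : 1 ≤ T) (hdw : 1 ≤ dw)
    (w : Fin T → Fin dw → ℝ) (j : Fin T → Fin dw)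
    (hw : ∀ t, w t = Pi.single (j t) 1)
    (y0 : ℝ) (hy0 : y0 = 0 ∨ y0 = 1)
    (y y' : Fin T → ℝ)
    (hy : ∀ t, y t = 0 ∨ y t = 1) (hy' : ∀ t, y' t = 0 ∨ y' t = 1)
    (h1 : ∀ k, ∑ t, w t k * y t = ∑ t, w t k * y' t)
    (h2 : ∀ k, ∑ t, w t k * ylag y0 y t = ∑ t, w t k * ylag y0 y' t) :
    ((Finset.univ.filter (fun t : Fin T => t.val ≠ 0)).val.map
        (fun t => (j t, ylag y0 y t))) =
      ((Finset.univ.filter (fun t : Fin T => t.val ≠ 0)).val.map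
        (fun t => (j t, ylag y0 y' t))) := by
  refine map_prodMk_eq_of_sum_fiber_eq _ j _ _ (fun t _ => ylag_eq_zero_or_one hy0 hy t)
    (fun t _ => ylag_eq_zero_or_one hy0 hy' t) fun k => ?_
  have hk := h2 k
  simp only [hw, Pi.single_apply, ite_mul, one_mul, zero_mul, eq_comm (a := k)] at hk
  rw [← Finset.sum_filter_add_sum_filter_not Finset.univ (fun t : Fin T => t.val ≠ 0),
    ← Finset.sum_filter_add_sum_filter_not Finset.univ (fun t : Fin T => t.val ≠ 0)
      (fun t => if j t = k then ylag y0 y' t else 0)] at hk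
  refine add_right_cancel (hk.trans (congrArg _ (Finset.sum_congr rfl fun t ht => ?_)))
  have ht0 : t.val = 0 := by simpa using ht
  simp [ylag, ht0]
end

section
/- For each t ∈ {1,…,T} let Q_t be the cardinality of the image of π_t (the number of distinct values π_t takes on {0,1}^{t−1}), and define D := { Σ_{t=1}^T k_t w_t : k_t ∈ {0,1,…,Q_t} for each t } ⊂ ℝ^{d_w}. Let M := { m : {0,1}^T → ℝ : for every A ∈ ℝ^{d_w}, Σ_{y ∈ {0,1}^T} m(y) · P(y | A) = 0 }, a linear subspace of the 2^T-dimensional real vector space of functions {0,1}^T → ℝ. Then dim_ℝ M ≥ 2^T − |D|, where |D| denotes the (finite) cardinality of D. -/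
/-- Conversion of a binary outcome sequence to a real vector. -/
def toR {T : ℕ} (y : Fin T → Bool) : Fin T → ℝ := fun t => if y t then 1 else 0

/-- `Q_t`: the number of distinct values taken by `π_t` on binary histories. -/
noncomputable def Qval {T : ℕ} (π : (t : Fin T) → (Fin t.val → ℝ) → ℝ) (t : Fin T) : ℕ :=
  (Finset.univ.image
    (fun h : Fin t.val → Bool => π t (fun s => if h s then (1 : ℝ) else 0))).card

/-- The set `D = {Σ_t k_t w_t : k_t ∈ {0,1,…,Q_t}} ⊆ ℝ^{d_w}`. -/
noncomputable def Dset {T dw : ℕ} (w : Fin T → Fin dw → ℝ)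
    (π : (t : Fin T) → (Fin t.val → ℝ) → ℝ) : Finset (Fin dw → ℝ) :=
  Finset.image
    (fun k : (t : Fin T) → Fin (Qval π t + 1) => ∑ t, ((k t : ℕ) : ℝ) • w t)
    Finset.univ

/-- The space `M` of fixed-effect-free moment functions `m : {0,1}^T → ℝ`, i.e. those
with `Σ_y m(y) P(y|A) = 0` for every `A ∈ ℝ^{d_w}`, realized as the kernel of the
linear map `m ↦ (A ↦ Σ_y m(y) P(y|A))`. -/
noncomputable def Mspace {T dw : ℕ} (w : Fin T → Fin dw → ℝ)
    (π : (t : Fin T) → (Fin t.val → ℝ) → ℝ) :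
    Submodule ℝ ((Fin T → Bool) → ℝ) :=
  LinearMap.ker
    (({ toFun := fun m => fun A : Fin dw → ℝ =>
          ∑ y : Fin T → Bool, m y * dynLogitP w π A (toR y)
        map_add' := by
          intro m m'
          funext A
          simp [add_mul, Finset.sum_add_distrib]
        map_smul' := by
          intro c m
          funext A
          simp [Finset.mul_sum, mul_assoc] } :
      ((Fin T → Bool) → ℝ) →ₗ[ℝ] ((Fin dw → ℝ) → ℝ)))

open Polynomial in
/-- A logit factor times the product of `1 + exp (v + x)` over a finite set `V` of indices
containing its own is a polynomial of degree at most `|V|` in `exp x`. -/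
theorem exists_logit_mul_prod_eq_sum (V : Finset ℝ) {p : ℝ} (hp : p ∈ V) (b : Bool) :
    ∃ c : Fin (V.card + 1) → ℝ, ∀ x : ℝ,
      Real.exp ((if b then 1 else 0) * (p + x)) / (1 + Real.exp (p + x)) *
        ∏ v ∈ V, (1 + Real.exp (v + x)) = ∑ k, c k * Real.exp x ^ (k : ℕ) := by
  let r : ℝ[X] := if b then C (Real.exp p) * X else 1
  let q : ℝ[X] := r * ∏ v ∈ V.erase p, (C (Real.exp v) * X + 1)
  have hr : r.natDegree ≤ 1 := by
    cases b
    · simp [r]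
    · simp [r]
  have hlin (v : ℝ) : (C (Real.exp v) * X + 1 : ℝ[X]).natDegree ≤ 1 := by
    simpa using natDegree_linear_le (a := Real.exp v) (b := 1)
  have hprod : (∏ v ∈ V.erase p, (C (Real.exp v) * X + 1 : ℝ[X])).natDegree ≤ V.card - 1 := by
    refine (natDegree_prod_le _ _).trans ((Finset.sum_le_sum fun v _ => hlin v).trans ?_)
    simp [Finset.card_erase_of_mem hp]
  have hq : q.natDegree < V.card + 1 := by
    have hV := Finset.card_pos.mpr ⟨p, hp⟩
    have := natDegree_mul_le (p := r) (q := ∏ v ∈ V.erase p, (C (Real.exp v) * X + 1))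
    change (r * _).natDegree < _
    omega
  refine ⟨fun k => q.coeff k, fun x => ?_⟩
  rw [Fin.sum_univ_eq_sum_range (fun k => q.coeff k * Real.exp x ^ k), ← eval_eq_sum_range' hq,
    ← Finset.mul_prod_erase V _ hp, ← mul_assoc, div_mul_cancel₀ _ (by positivity)]
  simp only [q, eval_mul, eval_prod, eval_add, eval_C, eval_X, eval_one]
  congr 1
  · cases b <;> simp [r, Real.exp_add]
  · exact Finset.prod_congr rfl fun v _ => by rw [Real.exp_add]; ring

/-- The values taken by `π_t` on binary histories. -/
noncomputable def indexValues {T : ℕ} (π : (t : Fin T) → (Fin t.val → ℝ) → ℝ) (t : Fin T) :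
    Finset ℝ :=
  Finset.univ.image (fun h : Fin t.val → Bool => π t (fun s => if h s then (1 : ℝ) else 0))

/-- A common denominator of the probabilities `P(y | A)`. -/
noncomputable def commonDenom {T dw : ℕ} (w : Fin T → Fin dw → ℝ)
    (π : (t : Fin T) → (Fin t.val → ℝ) → ℝ) (A : Fin dw → ℝ) : ℝ :=
  ∏ t, ∏ v ∈ indexValues π t, (1 + Real.exp (v + ∑ k, w t k * A k))

theorem commonDenom_pos {T dw : ℕ} (w : Fin T → Fin dw → ℝ)
    (π : (t : Fin T) → (Fin t.val → ℝ) → ℝ) (A : Fin dw → ℝ) : 0 < commonDenom w π A :=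
  Finset.prod_pos fun _ _ => Finset.prod_pos fun _ _ => by positivity

open scoped Classical in
/-- The span of the exponentials `A ↦ exp (d ⬝ A)` for `d ∈ D`. -/
noncomputable def expSpan {T dw : ℕ} (w : Fin T → Fin dw → ℝ)
    (π : (t : Fin T) → (Fin t.val → ℝ) → ℝ) : Submodule ℝ ((Fin dw → ℝ) → ℝ) :=
  Submodule.span ℝ
    ((Dset w π).image fun d (A : Fin dw → ℝ) => Real.exp (∑ k, d k * A k) :
      Finset ((Fin dw → ℝ) → ℝ))

theorem dynLogitP_mul_commonDenom_mem_expSpan {T dw : ℕ} (w : Fin T → Fin dw → ℝ)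
    (π : (t : Fin T) → (Fin t.val → ℝ) → ℝ) (y : Fin T → Bool) :
    (fun A => dynLogitP w π A (toR y) * commonDenom w π A) ∈ expSpan w π := by
  have hmem (t : Fin T) : π t (hist (toR y) t) ∈ indexValues π t :=
    Finset.mem_image.mpr ⟨fun s => y ⟨s.val, s.isLt.trans t.isLt⟩, Finset.mem_univ _, rfl⟩
  choose c hc using fun t => exists_logit_mul_prod_eq_sum (indexValues π t) (hmem t) (y t)
  have hexpand : (fun A => dynLogitP w π A (toR y) * commonDenom w π A) =
      ∑ k : (t : Fin T) → Fin (Qval π t + 1), (∏ t, c t (k t)) •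
        fun A => Real.exp (∑ j, (∑ t, ((k t : ℕ) : ℝ) • w t) j * A j) := by
    funext A
    have hfactor : dynLogitP w π A (toR y) * commonDenom w π A =
        ∏ t, ∑ k, c t k * Real.exp (∑ j, w t j * A j) ^ (k : ℕ) := by
      rw [dynLogitP, commonDenom, ← Finset.prod_mul_distrib]
      exact Finset.prod_congr rfl fun t _ => hc t _
    rw [hfactor, Finset.prod_univ_sum, Fintype.piFinset_univ, Finset.sum_apply]
    refine Finset.sum_congr rfl fun k _ => ?_
    rw [Finset.prod_mul_distrib, Pi.smul_apply, smul_eq_mul]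
    congr 1
    simp_rw [← Real.exp_nat_mul]
    rw [← Real.exp_sum]
    congr 1
    simp only [Finset.sum_apply, Pi.smul_apply, smul_eq_mul, Finset.sum_mul, Finset.mul_sum]
    rw [Finset.sum_comm]
    simp only [mul_assoc]
  rw [hexpand]
  refine Submodule.sum_mem _ fun k _ => Submodule.smul_mem _ _ (Submodule.subset_span ?_)
  classical
  exact Finset.mem_coe.mpr (Finset.mem_image_of_mem _
    (Finset.mem_image_of_mem _ (Finset.mem_univ k)))

/-- The dimension of the space of fixed-effect-free moment functions
is at least `2^T - |D|`. -/
theorem stmt8 {T dw : ℕ} (hT : 1 ≤ T) (hdw : 1 ≤ dw)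
    (w : Fin T → Fin dw → ℝ) (π : (t : Fin T) → (Fin t.val → ℝ) → ℝ) :
    2 ^ T - (Dset w π).card ≤ Module.finrank ℝ (Mspace w π) := by
  let L : ((Fin T → Bool) → ℝ) →ₗ[ℝ] ((Fin dw → ℝ) → ℝ) :=
    Fintype.linearCombination ℝ fun y A => dynLogitP w π A (toR y) * commonDenom w π A
  have hker : LinearMap.ker L = Mspace w π := by
    ext m
    simp only [Mspace, LinearMap.mem_ker, funext_iff, LinearMap.coe_mk, AddHom.coe_mk]
    refine forall_congr' fun A => ?_
    have hL : L m A = (∑ y, m y * dynLogitP w π A (toR y)) * commonDenom w π A := by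
      simp [L, Fintype.linearCombination_apply, Finset.sum_mul, mul_assoc]
    rw [hL]
    simp [(commonDenom_pos w π A).ne']
  have hrange : LinearMap.range L ≤ expSpan w π := by
    rw [Fintype.range_linearCombination, Submodule.span_le]
    rintro _ ⟨y, rfl⟩
    exact dynLogitP_mul_commonDenom_mem_expSpan w π y
  classical
  have : FiniteDimensional ℝ (expSpan w π) := FiniteDimensional.span_finset ℝ _
  have hle : Module.finrank ℝ (LinearMap.range L) ≤ (Dset w π).card :=
    (Submodule.finrank_mono hrange).trans
      ((finrank_span_finset_le_card _).trans Finset.card_image_le)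
  have hrank := L.finrank_range_add_finrank_ker
  rw [hker] at hrank
  simp only [Module.finrank_fintype_fun_eq_card, Fintype.card_fun, Fintype.card_bool,
    Fintype.card_fin] at hrank
  omega
end

section
/- For each t ∈ {1,…,T} let Q_t be the cardinality of the image of π_t, and define D := { Σ_{t=1}^T k_t w_t : k_t ∈ {0,1,…,Q_t} for each t } ⊂ ℝ^{d_w}. Then there exist a function κ : ℝ^{d_w} → (0,∞) and coefficients c : D × {0,1}^T → ℝ (not depending on A) such that for every y ∈ {0,1}^T and every A ∈ ℝ^{d_w}, P(y | A) = κ(A) · Σ_{d ∈ D} c(d, y) · exp(dᵀA). -/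
open Polynomial in
/-- The polynomial in `exp (wᵀA)` left as numerator of a logit factor with index `p` and outcome `b`
after multiplication by `∏ q ∈ V, (1 + exp (q + wᵀA))`. -/
noncomputable def logitNumerator (V : Finset ℝ) (p : ℝ) (b : Bool) : ℝ[X] :=
  (if b then C (Real.exp p) * X else 1) * ∏ q ∈ V.erase p, (C (Real.exp q) * X + 1)

open Polynomial in
lemma natDegree_logitNumerator_le {V : Finset ℝ} {p : ℝ} (hp : p ∈ V) (b : Bool) :
    (logitNumerator V p b).natDegree ≤ V.card := by
  have h1 : (if b then C (Real.exp p) * X else 1 : ℝ[X]).natDegree ≤ 1 := by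
    split_ifs
    · simp
    · simp
  have h2 : (∏ q ∈ V.erase p, (C (Real.exp q) * X + 1 : ℝ[X])).natDegree ≤ (V.erase p).card := by
    refine (natDegree_prod_le _ _).trans ((Finset.sum_le_card_nsmul _ _ 1 fun q _ => ?_).trans ?_)
    · simpa using natDegree_linear_le (a := Real.exp q) (b := 1)
    · simp
  have h3 := Finset.card_erase_add_one hp
  have h4 : (logitNumerator V p b).natDegree ≤ _ := natDegree_mul_le
  omega

lemma logit_factor_eq {V : Finset ℝ} {p : ℝ} (hp : p ∈ V) (b : Bool) (a : ℝ) :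
    Real.exp ((if b then 1 else 0) * (p + a)) / (1 + Real.exp (p + a)) =
      (∏ q ∈ V, (1 + Real.exp (q + a)))⁻¹ *
        ∑ k : Fin (V.card + 1), (logitNumerator V p b).coeff k * Real.exp a ^ (k : ℕ) := by
  have heval : ∑ k : Fin (V.card + 1), (logitNumerator V p b).coeff k * Real.exp a ^ (k : ℕ) =
      Real.exp ((if b then 1 else 0) * (p + a)) * ∏ q ∈ V.erase p, (1 + Real.exp (q + a)) := by
    rw [Fin.sum_univ_eq_sum_range
        (fun k => (logitNumerator V p b).coeff k * Real.exp a ^ k) (V.card + 1),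
      ← Polynomial.eval_eq_sum_range' (Nat.lt_succ_of_le (natDegree_logitNumerator_le hp b))]
    cases b <;> simp [logitNumerator, Polynomial.eval_prod, Real.exp_add, add_comm (1 : ℝ)]
  have hpos : ∀ q : ℝ, 1 + Real.exp (q + a) ≠ 0 := fun q => by positivity
  have hprod : ∏ q ∈ V.erase p, (1 + Real.exp (q + a)) ≠ 0 :=
    Finset.prod_ne_zero_iff.2 fun q _ => hpos q
  rw [heval, ← Finset.mul_prod_erase V _ hp]
  have := hpos p
  field_simp

lemma prod_exp_dot_pow {T dw : ℕ} (w : Fin T → Fin dw → ℝ) (A : Fin dw → ℝ) (k : Fin T → ℕ) :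
    ∏ t, Real.exp (∑ i, w t i * A i) ^ k t =
      Real.exp (∑ i, (∑ t, (k t : ℝ) • w t) i * A i) := by
  simp_rw [← Real.exp_nat_mul, ← Real.exp_sum, Finset.sum_apply, Finset.sum_mul, Finset.mul_sum]
  rw [Finset.sum_comm]
  simp [mul_assoc]

/-- There exist a positive function `κ : ℝ^{d_w} → (0,∞)` and
coefficients `c : D × {0,1}^T → ℝ` (not depending on `A`) such that for every binary
outcome `y` and every `A`, `P(y|A) = κ(A) Σ_{d ∈ D} c(d,y) exp(dᵀA)`. -/
theorem stmt9 {T dw : ℕ} (hT : 1 ≤ T) (hdw : 1 ≤ dw)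
    (w : Fin T → Fin dw → ℝ) (π : (t : Fin T) → (Fin t.val → ℝ) → ℝ) :
    ∃ (κ : (Fin dw → ℝ) → ℝ) (c : {d // d ∈ Dset w π} → (Fin T → Bool) → ℝ),
      (∀ A, 0 < κ A) ∧
      ∀ (y : Fin T → Bool) (A : Fin dw → ℝ),
        dynLogitP w π A (toR y) =
          κ A * ∑ d ∈ (Dset w π).attach,
            c d y * Real.exp (∑ i, (d : Fin dw → ℝ) i * A i) := by
  classical
  let V : Fin T → Finset ℝ := fun t => Finset.univ.image
    (fun h : Fin t.val → Bool => π t (fun s => if h s then (1 : ℝ) else 0))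
  have hV : ∀ (y : Fin T → Bool) t, π t (hist (toR y) t) ∈ V t := fun y t =>
    Finset.mem_image.2 ⟨fun s => y ⟨s.val, s.isLt.trans t.isLt⟩, Finset.mem_univ _, rfl⟩
  let f : ((t : Fin T) → Fin (Qval π t + 1)) → Fin dw → ℝ := fun k => ∑ t, ((k t : ℕ) : ℝ) • w t
  have hf : ∀ k, f k ∈ Dset w π := fun k => Finset.mem_image_of_mem _ (Finset.mem_univ k)
  let b : (Fin T → Bool) → ((t : Fin T) → Fin (Qval π t + 1)) → ℝ := fun y k =>
    ∏ t, (logitNumerator (V t) (π t (hist (toR y) t)) (y t)).coeff (k t)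
  refine ⟨fun A => ∏ t, (∏ q ∈ V t, (1 + Real.exp (q + ∑ i, w t i * A i)))⁻¹,
    fun d y => ∑ k with (⟨f k, hf k⟩ : {d // d ∈ Dset w π}) = d, b y k,
    fun A => by positivity, fun y A => ?_⟩
  have hsum : ∑ d ∈ (Dset w π).attach,
      (∑ k with (⟨f k, hf k⟩ : {d // d ∈ Dset w π}) = d, b y k) *
        Real.exp (∑ i, (d : Fin dw → ℝ) i * A i) =
      ∑ k, b y k * Real.exp (∑ i, f k i * A i) := by
    rw [← Finset.sum_fiberwise_of_maps_to
      (g := fun k => (⟨f k, hf k⟩ : {d // d ∈ Dset w π})) (fun k _ => Finset.mem_attach _ _)]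
    refine Finset.sum_congr rfl fun d _ => ?_
    rw [Finset.sum_mul]
    refine Finset.sum_congr rfl fun k hk => ?_
    rw [← (Finset.mem_filter.1 hk).2]
  rw [hsum]
  calc dynLogitP w π A (toR y)
      = ∏ t, ((∏ q ∈ V t, (1 + Real.exp (q + ∑ i, w t i * A i)))⁻¹ *
          ∑ k : Fin (Qval π t + 1),
            (logitNumerator (V t) (π t (hist (toR y) t)) (y t)).coeff k *
              Real.exp (∑ i, w t i * A i) ^ (k : ℕ)) :=
        Finset.prod_congr rfl fun t _ => logit_factor_eq (hV y t) (y t) _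
    _ = _ := by
      rw [Finset.prod_mul_distrib, Finset.prod_univ_sum, Fintype.piFinset_univ]
      congr 1
      refine Finset.sum_congr rfl fun k _ => ?_
      rw [Finset.prod_mul_distrib, prod_exp_dot_pow w A fun t => (k t : ℕ)]
end

section
/- Consider the AR(p) panel logit model: fix an integer p ≥ 1, parameters γ_1,…,γ_p ∈ ℝ and β ∈ ℝ^{d_x}, covariates x_1,…,x_T ∈ ℝ^{d_x}, fixed initial values y_0, y_{−1},…,y_{1−p} ∈ {0,1}, a scalar fixed effect A ∈ ℝ, and for y ∈ {0,1}^T (extended by the initial values) define P(y | A) := ∏_{t=1}^T exp(y_t (Σ_{r=1}^p γ_r y_{t−r} + x_tᵀβ + A)) / (1 + exp(Σ_{r=1}^p γ_r y_{t−r} + x_tᵀβ + A)). Assume T ≥ p. Then the linear subspace M := { m : {0,1}^T → ℝ : Σ_{y ∈ {0,1}^T} m(y) P(y | A) = 0 for all A ∈ ℝ } of the 2^T-dimensional space of functions {0,1}^T → ℝ satisfies dim_ℝ M ≥ 2^T − 2^p (T + 1 − p). -/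
/-- The lagged outcome `y_{t-r}` in an AR(p) model (0-indexed `t : Fin T`, lag
`r.val + 1` for `r : Fin p`), where `yinit i` is the fixed initial value `y_{-i}`
(so `yinit 0 = y_0, …, yinit (p-1) = y_{1-p}`). -/
def lagAR {T p : ℕ} (yinit : Fin p → ℝ) (y : Fin T → ℝ) (t : Fin T) (r : Fin p) : ℝ :=
  if h : r.val < t.val then
    y ⟨t.val - r.val - 1, lt_of_le_of_lt (le_trans (Nat.sub_le _ _) (Nat.sub_le _ _)) t.isLt⟩
  else yinit ⟨r.val - t.val, lt_of_le_of_lt (Nat.sub_le _ _) r.isLt⟩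

/-- The AR(p) panel logit probability with covariates and scalar fixed effect `A`:
`P(y|A) = ∏_t exp(y_t (Σ_r γ_r y_{t-r} + x_tᵀβ + A)) / (1 + exp(Σ_r γ_r y_{t-r} + x_tᵀβ + A))`. -/
noncomputable def arpP {T p dx : ℕ} (γ : Fin p → ℝ) (β : Fin dx → ℝ)
    (x : Fin T → Fin dx → ℝ) (yinit : Fin p → ℝ) (A : ℝ) (y : Fin T → ℝ) : ℝ :=
  ∏ t, Real.exp (y t * ((∑ r, γ r * lagAR yinit y t r) + (∑ i, x t i * β i) + A)) /
      (1 + Real.exp ((∑ r, γ r * lagAR yinit y t r) + (∑ i, x t i * β i) + A))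

/-- The space of fixed-effect-free moment functions `m : {0,1}^T → ℝ` for the AR(p)
panel logit model, i.e. those with `Σ_y m(y) P(y|A) = 0` for every `A ∈ ℝ`. -/
noncomputable def MspaceAR {T p dx : ℕ} (γ : Fin p → ℝ) (β : Fin dx → ℝ)
    (x : Fin T → Fin dx → ℝ) (yinit : Fin p → ℝ) :
    Submodule ℝ ((Fin T → Bool) → ℝ) :=
  LinearMap.ker
    (({ toFun := fun m => fun A : ℝ =>
          ∑ y : Fin T → Bool, m y * arpP γ β x yinit A (toR y)
        map_add' := by
          intro m m'
          funext A
          simp [add_mul, Finset.sum_add_distrib]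
        map_smul' := by
          intro c m
          funext A
          simp [Finset.mul_sum, mul_assoc] } :
      ((Fin T → Bool) → ℝ) →ₗ[ℝ] (ℝ → ℝ)))

open Polynomial

/-- The logit index at time `t`, without the fixed effect. -/
noncomputable def arIndex {T p dx : ℕ} (γ : Fin p → ℝ) (β : Fin dx → ℝ)
    (x : Fin T → Fin dx → ℝ) (yinit : Fin p → ℝ) (t : Fin T) (y : Fin T → Bool) : ℝ :=
  (∑ r, γ r * lagAR yinit (toR y) t r) + ∑ i, x t i * β i

/-- The finitely many values that the index takes at time `t`. -/
noncomputable def arIndexValues {T p dx : ℕ} (γ : Fin p → ℝ) (β : Fin dx → ℝ)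
    (x : Fin T → Fin dx → ℝ) (yinit : Fin p → ℝ) (t : Fin T) : Finset ℝ :=
  Finset.univ.image (arIndex γ β x yinit t)

/-- The index at time `t` depends only on the last `min t p` outcomes. -/
lemma card_arIndexValues_le {T p dx : ℕ} (γ : Fin p → ℝ) (β : Fin dx → ℝ)
    (x : Fin T → Fin dx → ℝ) (yinit : Fin p → ℝ) (t : Fin T) :
    (arIndexValues γ β x yinit t).card ≤ 2 ^ min t.val p := by
  let extend : (Fin (min t.val p) → Bool) → Fin T → Bool := fun h j =>
    if hj : t.val - 1 - j.val < min t.val p then h ⟨t.val - 1 - j.val, hj⟩ else false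
  have hsub : arIndexValues γ β x yinit t ⊆
      Finset.univ.image (fun h => arIndex γ β x yinit t (extend h)) := by
    intro c hc
    obtain ⟨y, -, rfl⟩ := Finset.mem_image.mp hc
    refine Finset.mem_image.mpr
      ⟨fun i => y ⟨t.val - 1 - i.val, by have := t.isLt; omega⟩, Finset.mem_univ _, ?_⟩
    unfold arIndex
    congr 1
    refine Finset.sum_congr rfl fun r _ => ?_
    congr 1
    unfold lagAR
    split_ifs with hr
    · have hj : t.val - 1 - (t.val - r.val - 1) < min t.val p := by
        have := r.isLt
        omega
      have he : t.val - 1 - (t.val - 1 - (t.val - r.val - 1)) = t.val - r.val - 1 := by omega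
      simp only [toR, extend, dif_pos hj, he]
    · rfl
  calc (arIndexValues γ β x yinit t).card ≤ _ := Finset.card_le_card hsub
    _ ≤ _ := Finset.card_image_le
    _ = 2 ^ min t.val p := by simp

lemma sum_two_pow_min_add_one {T p : ℕ} (hT : p ≤ T) :
    (∑ t : Fin T, 2 ^ min t.val p) + 1 = 2 ^ p * (T + 1 - p) := by
  rw [Fin.sum_univ_eq_sum_range (fun t => 2 ^ min t p)]
  induction T, hT using Nat.le_induction with
  | base =>
    rw [Finset.sum_congr rfl fun t ht => by
      rw [min_eq_left (Finset.mem_range.mp ht).le]]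
    rw [Nat.geomSum_eq le_rfl]
    have := Nat.one_le_two_pow (n := p)
    simp
    omega
  | succ T hT ih =>
    rw [Finset.sum_range_succ, min_eq_right hT, add_right_comm, ih,
      show T + 1 + 1 - p = (T + 1 - p) + 1 by omega, mul_add, mul_one]

/-- The factor at time `t` of the numerator of `P(y|A)`, as a polynomial in `exp A`, over the
common denominator of all outcome sequences. -/
noncomputable def arFactor {T p dx : ℕ} (γ : Fin p → ℝ) (β : Fin dx → ℝ)
    (x : Fin T → Fin dx → ℝ) (yinit : Fin p → ℝ) (y : Fin T → Bool) (t : Fin T) : ℝ[X] :=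
  (if y t then C (Real.exp (arIndex γ β x yinit t y)) * X else 1) *
    ∏ c ∈ (arIndexValues γ β x yinit t).erase (arIndex γ β x yinit t y),
      (C (Real.exp c) * X + 1)

lemma natDegree_arFactor_le {T p dx : ℕ} (γ : Fin p → ℝ) (β : Fin dx → ℝ)
    (x : Fin T → Fin dx → ℝ) (yinit : Fin p → ℝ) (y : Fin T → Bool) (t : Fin T) :
    (arFactor γ β x yinit y t).natDegree ≤ 2 ^ min t.val p := by
  have hmem : arIndex γ β x yinit t y ∈ arIndexValues γ β x yinit t :=
    Finset.mem_image_of_mem _ (Finset.mem_univ y)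
  have hprod : (∏ c ∈ (arIndexValues γ β x yinit t).erase (arIndex γ β x yinit t y),
      (C (Real.exp c) * X + 1)).natDegree ≤
      ((arIndexValues γ β x yinit t).erase (arIndex γ β x yinit t y)).card := by
    refine (natDegree_prod_le _ _).trans ((Finset.sum_le_card_nsmul _ _ 1 fun c _ => ?_).trans ?_)
    · exact natDegree_linear_le (b := (1 : ℝ))
    · simp
  have hone : (if y t then C (Real.exp (arIndex γ β x yinit t y)) * X else 1 : ℝ[X]).natDegree
      ≤ 1 := by
    split_ifs
    · exact (natDegree_C_mul_le _ _).trans natDegree_X_le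
    · simp
  have hcard := Finset.card_erase_add_one hmem
  have hle := card_arIndexValues_le γ β x yinit t
  have hmul := natDegree_mul_le_of_le hone hprod
  unfold arFactor
  omega

lemma eval_arFactor {T p dx : ℕ} (γ : Fin p → ℝ) (β : Fin dx → ℝ)
    (x : Fin T → Fin dx → ℝ) (yinit : Fin p → ℝ) (y : Fin T → Bool) (t : Fin T) (A : ℝ) :
    (arFactor γ β x yinit y t).eval (Real.exp A) =
      Real.exp (toR y t * (arIndex γ β x yinit t y + A)) /
        (1 + Real.exp (arIndex γ β x yinit t y + A)) *
        ∏ c ∈ arIndexValues γ β x yinit t, (1 + Real.exp (c + A)) := by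
  have hmem : arIndex γ β x yinit t y ∈ arIndexValues γ β x yinit t :=
    Finset.mem_image_of_mem _ (Finset.mem_univ y)
  have hpos : 1 + Real.exp (arIndex γ β x yinit t y + A) ≠ 0 := by positivity
  rw [← Finset.mul_prod_erase _ _ hmem, ← mul_assoc, div_mul_cancel₀ _ hpos, arFactor, eval_mul,
    eval_prod]
  congr 1
  · by_cases hy : y t <;> simp [toR, hy, Real.exp_add]
  · exact Finset.prod_congr rfl fun c _ => by simp [Real.exp_add, add_comm (1 : ℝ)]

/-- In the AR(p) panel logit model with covariates and scalar fixed
effect, if `T ≥ p`, then the space of fixed-effect-free moment functions has dimension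
at least `2^T - 2^p (T + 1 - p)`. -/
theorem stmt11 {T p dx : ℕ} (hp : 1 ≤ p) (hdx : 1 ≤ dx) (hT : p ≤ T)
    (γ : Fin p → ℝ) (β : Fin dx → ℝ) (x : Fin T → Fin dx → ℝ)
    (yinit : Fin p → ℝ) (hyinit : ∀ i, yinit i = 0 ∨ yinit i = 1) :
    2 ^ T - 2 ^ p * (T + 1 - p) ≤ Module.finrank ℝ (MspaceAR γ β x yinit) := by
  set N := 2 ^ p * (T + 1 - p)
  let num : (Fin T → Bool) → ℝ[X] := fun y => ∏ t, arFactor γ β x yinit y t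
  have hdeg : ∀ y, num y ∈ degreeLT ℝ N := by
    intro y
    have h1 : (num y).natDegree ≤ ∑ t : Fin T, 2 ^ min t.val p :=
      (natDegree_prod_le _ _).trans
        (Finset.sum_le_sum fun t _ => natDegree_arFactor_le γ β x yinit y t)
    rw [mem_degreeLT]
    refine degree_le_natDegree.trans_lt (Nat.cast_lt.mpr ?_)
    have := sum_two_pow_min_add_one hT
    omega
  let L : ((Fin T → Bool) → ℝ) →ₗ[ℝ] degreeLT ℝ N :=
    Fintype.linearCombination ℝ fun y => ⟨num y, hdeg y⟩
  have hfin : Module.finrank ℝ (degreeLT ℝ N) = N := by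
    simpa using (degreeLTEquiv ℝ N).finrank_eq
  have : Module.Finite ℝ (degreeLT ℝ N) := Module.Finite.equiv (degreeLTEquiv ℝ N).symm
  have hker : LinearMap.ker L ≤ MspaceAR γ β x yinit := by
    intro m hm
    have hzero : ∑ y, m y • num y = 0 := by
      have := congrArg Subtype.val (LinearMap.mem_ker.mp hm)
      simpa [L, Fintype.linearCombination_apply] using this
    refine LinearMap.mem_ker.mpr (funext fun A => ?_)
    change ∑ y, m y * arpP γ β x yinit A (toR y) = 0
    have hD : (∏ t, ∏ c ∈ arIndexValues γ β x yinit t, (1 + Real.exp (c + A))) ≠ 0 :=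
      Finset.prod_ne_zero_iff.mpr fun t _ => Finset.prod_ne_zero_iff.mpr fun c _ => by positivity
    refine (mul_eq_zero_iff_right hD).mp ?_
    have heval := congrArg (eval (Real.exp A)) hzero
    rw [eval_finsetSum, eval_zero] at heval
    rw [← heval, Finset.sum_mul]
    refine Finset.sum_congr rfl fun y _ => ?_
    rw [eval_smul, smul_eq_mul, mul_assoc]
    congr 1
    rw [eval_prod, arpP, ← Finset.prod_mul_distrib]
    exact Finset.prod_congr rfl fun t _ => (eval_arFactor γ β x yinit y t A).symm
  have hrn := LinearMap.finrank_range_add_finrank_ker L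
  have hrange := Submodule.finrank_le (LinearMap.range L)
  have hmono := Submodule.finrank_mono hker
  have hdom : Module.finrank ℝ ((Fin T → Bool) → ℝ) = 2 ^ T := by simp
  omega
end

section
/- Consider the AR(2) panel logit model with T = 3 and initial conditions y_{−1} = 0, y_0 = 0: for γ₁, γ₂, A ∈ ℝ and y = (y₁,y₂,y₃) ∈ {0,1}³ define P(y | A) := ∏_{t=1}^3 exp(y_t (γ₁ y_{t−1} + γ₂ y_{t−2} + A)) / (1 + exp(γ₁ y_{t−1} + γ₂ y_{t−2} + A)), using the fixed initial values. Define m : {0,1}³ → ℝ by m(0,1,1) = exp(−γ₁), m(0,1,0) = 1, m(1,0,0) = m(1,0,1) = −1, and m(y) = 0 for all other y. Then for every A ∈ ℝ, Σ_{y ∈ {0,1}³} m(y) · P(y | A) = 0. -/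
/-- Conversion of a binary value to a real number. -/
def b2r (x : Bool) : ℝ := if x then 1 else 0

/-- Single-period logit factor: probability of outcome `yt ∈ {0,1}` when the index is
`u`, i.e. `exp(yt · u) / (1 + exp u)`. -/
noncomputable def logitFactor (u yt : ℝ) : ℝ := Real.exp (yt * u) / (1 + Real.exp u)

/-- AR(2) panel logit probability with `T = 3` and initial conditions
`y₋₁ = 0, y₀ = 0`: `P(y|A) = ∏_{t=1}^3 exp(y_t (γ₁ y_{t-1} + γ₂ y_{t-2} + A)) /
(1 + exp(γ₁ y_{t-1} + γ₂ y_{t-2} + A))`. -/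
noncomputable def P12 (γ1 γ2 A : ℝ) (y : Bool × Bool × Bool) : ℝ :=
  logitFactor (γ1 * 0 + γ2 * 0 + A) (b2r y.1) *
    logitFactor (γ1 * b2r y.1 + γ2 * 0 + A) (b2r y.2.1) *
    logitFactor (γ1 * b2r y.2.1 + γ2 * b2r y.1 + A) (b2r y.2.2)

/-- The moment function: `m(0,1,1) = exp(-γ₁)`, `m(0,1,0) = 1`,
`m(1,0,·) = -1`, and `m = 0` otherwise. -/
noncomputable def m12 (γ1 : ℝ) (y : Bool × Bool × Bool) : ℝ :=
  if y = (false, true, true) then Real.exp (-γ1)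
  else if y = (false, true, false) then 1
  else if y.1 = true ∧ y.2.1 = false then -1
  else 0

/-- In the AR(2) panel logit model with `T = 3` and initial
conditions `y₋₁ = 0, y₀ = 0`, the function `m12` is a valid fixed-effect-free moment
function: `Σ_{y ∈ {0,1}³} m(y) P(y|A) = 0` for every `A ∈ ℝ`. -/
theorem stmt12 (γ1 γ2 : ℝ) :
    ∀ A : ℝ, ∑ y : Bool × Bool × Bool, m12 γ1 y * P12 γ1 γ2 A y = 0 := by
  intro A
  have h₀ : (1 + Real.exp A) ≠ 0 := by positivity
  have h₁ : (1 + Real.exp γ1 * Real.exp A) ≠ 0 := by positivity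
  have h₂ : (1 + Real.exp γ2 * Real.exp A) ≠ 0 := by positivity
  have hγ : Real.exp γ1 ≠ 0 := Real.exp_ne_zero γ1
  simp [Fintype.sum_prod_type, m12, P12, logitFactor, b2r, Real.exp_add, Real.exp_neg]
  field_simp
  ring
end

section
/- Consider the AR(2) panel logit model with T = 3 and initial conditions y_{−1} = 0, y_0 = 1: for γ₁, γ₂, A ∈ ℝ and y = (y₁,y₂,y₃) ∈ {0,1}³ define P(y | A) := ∏_{t=1}^3 exp(y_t (γ₁ y_{t−1} + γ₂ y_{t−2} + A)) / (1 + exp(γ₁ y_{t−1} + γ₂ y_{t−2} + A)), using the fixed initial values. Define m : {0,1}³ → ℝ by m(1,0,0) = exp(γ₂ − γ₁), m(1,0,1) = exp(γ₂), m(0,1,0) = m(0,1,1) = −1, and m(y) = 0 for all other y. Then for every A ∈ ℝ, Σ_{y ∈ {0,1}³} m(y) · P(y | A) = 0. -/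
/-- AR(2) panel logit probability with `T = 3` and initial conditions
`y₋₁ = 0, y₀ = 1`: `P(y|A) = ∏_{t=1}^3 exp(y_t (γ₁ y_{t-1} + γ₂ y_{t-2} + A)) /
(1 + exp(γ₁ y_{t-1} + γ₂ y_{t-2} + A))`. -/
noncomputable def P13 (γ1 γ2 A : ℝ) (y : Bool × Bool × Bool) : ℝ :=
  logitFactor (γ1 * 1 + γ2 * 0 + A) (b2r y.1) *
    logitFactor (γ1 * b2r y.1 + γ2 * 1 + A) (b2r y.2.1) *
    logitFactor (γ1 * b2r y.2.1 + γ2 * b2r y.1 + A) (b2r y.2.2)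

/-- The moment function: `m(1,0,0) = exp(γ₂ - γ₁)`, `m(1,0,1) = exp(γ₂)`,
`m(0,1,·) = -1`, and `m = 0` otherwise. -/
noncomputable def m13 (γ1 γ2 : ℝ) (y : Bool × Bool × Bool) : ℝ :=
  if y = (true, false, false) then Real.exp (γ2 - γ1)
  else if y = (true, false, true) then Real.exp γ2
  else if y.1 = false ∧ y.2.1 = true then -1
  else 0

/-- In the AR(2) panel logit model with `T = 3` and initial
conditions `y₋₁ = 0, y₀ = 1`, the function `m13` is a valid fixed-effect-free moment
function: `Σ_{y ∈ {0,1}³} m(y) P(y|A) = 0` for every `A ∈ ℝ`. -/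
theorem stmt13 (γ1 γ2 : ℝ) :
    ∀ A : ℝ, ∑ y : Bool × Bool × Bool, m13 γ1 γ2 y * P13 γ1 γ2 A y = 0 := by
  intro A
  have h₁ : 1 + Real.exp γ1 * Real.exp A ≠ 0 := by positivity
  have h₂ : 1 + Real.exp γ2 * Real.exp A ≠ 0 := by positivity
  have h₁₂ : 1 + Real.exp γ1 * Real.exp γ2 * Real.exp A ≠ 0 := by positivity
  simp [Fintype.sum_prod_type, m13, P13, logitFactor, b2r, Real.exp_add, Real.exp_sub]
  field_simp
  ring
end

section
/- Consider the AR(p) logit model with general fixed effects: fix p ≥ 1, γ_1,…,γ_p ∈ ℝ, weight vectors w_1,…,w_T ∈ ℝ^{d_w} each of which is a standard basis vector, and fixed initial values y_0,…,y_{1−p} ∈ {0,1}; for y ∈ {0,1}^T (extended by the initial values, identically for all sequences considered) and A ∈ ℝ^{d_w}, define P(y | A) := ∏_{t=1}^T exp(y_t (Σ_{r=1}^p γ_r y_{t−r} + w_tᵀA)) / (1 + exp(Σ_{r=1}^p γ_r y_{t−r} + w_tᵀA)). Let y, ỹ ∈ {0,1}^T satisfy: (i) Σ_{t=1}^T w_t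 y_t = Σ_{t=1}^T w_t ỹ_t; and (ii) for every l ∈ {1,…,p} and every strictly increasing tuple 1 ≤ i_1 < … < i_l ≤ p, Σ_{t=1}^T w_t ∏_{j=1}^l y_{t−i_j} = Σ_{t=1}^T w_t ∏_{j=1}^l ỹ_{t−i_j}. Then for every A ∈ ℝ^{d_w}, P(y | A) / P(ỹ | A) = exp( Σ_{t=1}^T [ y_t Σ_{r=1}^p γ_r y_{t−r} − ỹ_t Σ_{r=1}^p γ_r ỹ_{t−r} ] ); in particular this ratio does not depend on A. -/
/-- The AR(p) logit probability with general fixed effects: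
`P(y|A) = ∏_t exp(y_t (Σ_r γ_r y_{t-r} + w_tᵀA)) / (1 + exp(Σ_r γ_r y_{t-r} + w_tᵀA))`. -/
noncomputable def arpPW {T p dw : ℕ} (γ : Fin p → ℝ) (w : Fin T → Fin dw → ℝ)
    (yinit : Fin p → ℝ) (A : Fin dw → ℝ) (y : Fin T → ℝ) : ℝ :=
  ∏ t, Real.exp (y t * ((∑ r, γ r * lagAR yinit y t r) + ∑ k, w t k * A k)) /
      (1 + Real.exp ((∑ r, γ r * lagAR yinit y t r) + ∑ k, w t k * A k))

open Finset in
/-- A function of a binary vector is a multilinear polynomial: it is interpolated by its values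
at the indicator vectors. -/
theorem eq_sum_indicator_mul_prod_of_binary {ι : Type*} [Fintype ι] [DecidableEq ι]
    (F : (ι → ℝ) → ℝ) (x : ι → ℝ) (hx : ∀ i, x i = 0 ∨ x i = 1) :
    F x = ∑ U : Finset ι, F (fun i => if i ∈ U then 1 else 0) *
      ((∏ i ∈ U, x i) * ∏ i ∈ Uᶜ, (1 - x i)) := by
  rw [sum_eq_single (univ.filter fun i => x i = 1)]
  · have hind : (fun i => if i ∈ univ.filter (fun i => x i = 1) then (1 : ℝ) else 0) = x := by
      ext i
      rcases hx i with h | h <;> simp [h]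
    have hone : ∏ i ∈ univ.filter (fun i => x i = 1), x i = 1 :=
      prod_eq_one fun i hi => (mem_filter.mp hi).2
    have hzero : ∏ i ∈ (univ.filter fun i => x i = 1)ᶜ, (1 - x i) = 1 := by
      refine prod_eq_one fun i hi => ?_
      rcases hx i with h | h
      · simp [h]
      · simp [h] at hi
    rw [hind, hone, hzero, one_mul, mul_one]
  · intro U _ hU
    obtain ⟨i, hi⟩ : ∃ i, ¬(i ∈ U ↔ x i = 1) := by
      by_contra! h
      exact hU (by ext i; simp [h i])
    by_cases hiU : i ∈ U
    · have h0 : x i = 0 := (hx i).resolve_right fun h => hi (by simp [hiU, h])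
      rw [prod_eq_zero hiU h0, zero_mul, mul_zero]
    · have h1 : x i = 1 := by
        by_contra h
        exact hi (by simp [hiU, h])
      rw [prod_eq_zero (mem_compl.mpr hiU) (by rw [h1, sub_self]), mul_zero, mul_zero]
  · simp

open Finset in
/-- If two weighted families of binary vectors have the same multilinear moments, they give the
same weighted sum to every function. -/
theorem sum_mul_eq_of_multilinear_moments_eq {τ ι : Type*} [Fintype τ] [Fintype ι]
    (a : τ → ℝ) (x x' : τ → ι → ℝ)
    (hx : ∀ t i, x t i = 0 ∨ x t i = 1) (hx' : ∀ t i, x' t i = 0 ∨ x' t i = 1)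
    (h : ∀ S : Finset ι, S.Nonempty →
      ∑ t, a t * ∏ i ∈ S, x t i = ∑ t, a t * ∏ i ∈ S, x' t i)
    (F : (ι → ℝ) → ℝ) : ∑ t, a t * F (x t) = ∑ t, a t * F (x' t) := by
  classical
  have hall : ∀ S : Finset ι, ∑ t, a t * ∏ i ∈ S, x t i = ∑ t, a t * ∏ i ∈ S, x' t i := by
    intro S
    rcases S.eq_empty_or_nonempty with rfl | hS
    · simp
    · exact h S hS
  have hexp : ∀ (z : ι → ℝ) (U : Finset ι), (∏ i ∈ U, z i) * ∏ i ∈ Uᶜ, (1 - z i) =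
      ∑ V ∈ Uᶜ.powerset, (-1) ^ #V * ∏ i ∈ U ∪ V, z i := by
    intro z U
    simp_rw [sub_eq_neg_add]
    rw [prod_add, mul_sum]
    refine sum_congr rfl fun V hV => ?_
    have hdisj : Disjoint U V := disjoint_compl_right.mono_right (mem_powerset.mp hV)
    rw [prod_union hdisj, prod_neg, prod_const_one]
    ring
  have hswap : ∀ z : τ → ι → ℝ, (∀ t i, z t i = 0 ∨ z t i = 1) → ∑ t, a t * F (z t) =
      ∑ U : Finset ι, ∑ V ∈ Uᶜ.powerset, F (fun i => if i ∈ U then 1 else 0) * (-1) ^ #V *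
        ∑ t, a t * ∏ i ∈ U ∪ V, z t i := by
    intro z hz
    simp_rw [fun t => eq_sum_indicator_mul_prod_of_binary F (z t) (hz t), hexp, mul_sum]
    rw [sum_comm]
    refine sum_congr rfl fun U _ => ?_
    rw [sum_comm]
    refine sum_congr rfl fun V _ => sum_congr rfl fun t _ => ?_
    ring
  simp_rw [hswap x hx, hswap x' hx', hall]

theorem lagAR_eq_zero_or_one {T p : ℕ} {yinit : Fin p → ℝ} {y : Fin T → ℝ}
    (hyinit : ∀ i, yinit i = 0 ∨ yinit i = 1) (hy : ∀ t, y t = 0 ∨ y t = 1)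
    (t : Fin T) (r : Fin p) : lagAR yinit y t r = 0 ∨ lagAR yinit y t r = 1 := by
  unfold lagAR
  split
  · exact hy _
  · exact hyinit _

/-- With standard basis weights, the log-normalizer of the model splits over the coordinates of
the fixed effect. -/
theorem prod_one_add_exp_eq_exp_sum_of_single {T dw : ℕ} (w : Fin T → Fin dw → ℝ)
    (hw : ∀ t, ∃ j : Fin dw, w t = Pi.single j 1) (A : Fin dw → ℝ) (s : Fin T → ℝ) :
    ∏ t, (1 + Real.exp (s t + ∑ k, w t k * A k)) =
      Real.exp (∑ k, ∑ t, w t k * Real.log (1 + Real.exp (s t + A k))) := by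
  rw [Finset.sum_comm, Real.exp_sum]
  refine Finset.prod_congr rfl fun t _ => ?_
  obtain ⟨j, hj⟩ := hw t
  simp only [hj, Pi.single_apply, ite_mul, one_mul, zero_mul, Finset.sum_ite_eq',
    Finset.mem_univ, if_true]
  rw [Real.exp_log (by positivity)]

/-- In the AR(p) logit model with standard-basis weight vectors and
fixed initial values, if `y, y'` satisfy (i) `Σ_t w_t y_t = Σ_t w_t y'_t` and (ii) for
every nonempty increasing tuple `1 ≤ i_1 < … < i_l ≤ p` (i.e. nonempty subset `S` of
lags) `Σ_t w_t Π_{r ∈ S} y_{t-r} = Σ_t w_t Π_{r ∈ S} y'_{t-r}`, then for every `A`,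
`P(y|A)/P(y'|A) = exp(Σ_t [y_t Σ_r γ_r y_{t-r} - y'_t Σ_r γ_r y'_{t-r}])`;
in particular the ratio does not depend on `A`. -/
theorem stmt14 {T p dw : ℕ} (hT : 1 ≤ T) (hp : 1 ≤ p) (hdw : 1 ≤ dw)
    (γ : Fin p → ℝ) (w : Fin T → Fin dw → ℝ)
    (hw : ∀ t, ∃ j : Fin dw, w t = Pi.single j 1)
    (yinit : Fin p → ℝ) (hyinit : ∀ i, yinit i = 0 ∨ yinit i = 1)
    (y y' : Fin T → ℝ)
    (hy : ∀ t, y t = 0 ∨ y t = 1) (hy' : ∀ t, y' t = 0 ∨ y' t = 1)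
    (h1 : ∀ k, ∑ t, w t k * y t = ∑ t, w t k * y' t)
    (h2 : ∀ S : Finset (Fin p), S.Nonempty → ∀ k,
      ∑ t, w t k * ∏ r ∈ S, lagAR yinit y t r =
        ∑ t, w t k * ∏ r ∈ S, lagAR yinit y' t r) :
    ∀ A : Fin dw → ℝ,
      arpPW γ w yinit A y / arpPW γ w yinit A y' =
        Real.exp (∑ t, (y t * ∑ r, γ r * lagAR yinit y t r -
          y' t * ∑ r, γ r * lagAR yinit y' t r)) := by
  intro A
  have hden : ∏ t, (1 + Real.exp ((∑ r, γ r * lagAR yinit y t r) + ∑ k, w t k * A k)) =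
      ∏ t, (1 + Real.exp ((∑ r, γ r * lagAR yinit y' t r) + ∑ k, w t k * A k)) := by
    rw [prod_one_add_exp_eq_exp_sum_of_single w hw, prod_one_add_exp_eq_exp_sum_of_single w hw]
    congr 1
    refine Finset.sum_congr rfl fun k _ => ?_
    exact sum_mul_eq_of_multilinear_moments_eq (fun t => w t k) (lagAR yinit y) (lagAR yinit y')
      (lagAR_eq_zero_or_one hyinit hy) (lagAR_eq_zero_or_one hyinit hy') (fun S hS => h2 S hS k)
      (fun x => Real.log (1 + Real.exp ((∑ r, γ r * x r) + A k)))
  have hfix : ∑ t, y t * ∑ k, w t k * A k = ∑ t, y' t * ∑ k, w t k * A k := by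
    have hswap : ∀ z : Fin T → ℝ,
        ∑ t, z t * ∑ k, w t k * A k = ∑ k, A k * ∑ t, w t k * z t := by
      intro z
      simp_rw [Finset.mul_sum]
      rw [Finset.sum_comm]
      exact Finset.sum_congr rfl fun k _ => Finset.sum_congr rfl fun t _ => by ring
    simp_rw [hswap, h1]
  have hpos : ∏ t, (1 + Real.exp ((∑ r, γ r * lagAR yinit y' t r) + ∑ k, w t k * A k)) ≠ 0 :=
    Finset.prod_ne_zero_iff.mpr fun t _ => by positivity
  unfold arpPW
  rw [Finset.prod_div_distrib, Finset.prod_div_distrib, hden, div_div_div_cancel_right₀ hpos,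
    ← Real.exp_sum, ← Real.exp_sum, ← Real.exp_sub]
  simp_rw [mul_add, Finset.sum_add_distrib]
  rw [hfix, add_sub_add_right_eq_sub, Finset.sum_sub_distrib]
end

section
/- Consider the AR(2) logit model with general fixed effects: fix γ₁, γ₂ ∈ ℝ, weight vectors w_1,…,w_T ∈ ℝ^{d_w} each of which is a standard basis vector, and fixed initial values y_{−1}, y_0 ∈ {0,1}; for y ∈ {0,1}^T (extended by these initial values) and A ∈ ℝ^{d_w}, define P(y | A) := ∏_{t=1}^T exp(y_t (γ₁ y_{t−1} + γ₂ y_{t−2} + w_tᵀA)) / (1 + exp(γ₁ y_{t−1} + γ₂ y_{t−2} + w_tᵀA)). Let y, ỹ ∈ {0,1}^T (with the same initial values) satisfy the four conditions: Σ_{t=1}^T w_t y_t = Σ_{t=1}^T w_t ỹ_t, Σ_{t=1}^T w_t y_{t−1} = Σ_{t=1}^T w_t ỹ_{t−1}, Σ_{t=1}^T w_t y_{t−2} = Σ_{t=1}^T w_t ỹ_{t−2}, and Σ_{t=1}^T w_t y_{t−1} y_{t−2} = Σ_{t=1}^T w_t ỹ_{t−1} ỹ_{t−2}, with T ≥ 2.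 Then: (a) y_{T−1} = ỹ_{T−1} and y_T = ỹ_T; (b) Σ_{t=1}^T y_t y_{t−1} = Σ_{t=1}^T ỹ_t ỹ_{t−1}; and (c) for every A ∈ ℝ^{d_w}, P(y | A) / P(ỹ | A) = exp( γ₂ Σ_{t=1}^T ( y_t y_{t−2} − ỹ_t ỹ_{t−2} ) ), which depends neither on A nor on γ₁. -/
/-- The first lag `y_{t-1}`, with fixed initial value `y₀` at `t = 1` (0-indexed). -/
def lag1 {T : ℕ} (y0 : ℝ) (y : Fin T → ℝ) (t : Fin T) : ℝ :=
  if t.val = 0 then y0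
  else y ⟨t.val - 1, lt_of_le_of_lt (Nat.sub_le _ _) t.isLt⟩

/-- The second lag `y_{t-2}`, with fixed initial values `y₋₁` at `t = 1` and `y₀` at
`t = 2` (0-indexed). -/
def lag2 {T : ℕ} (ym1 y0 : ℝ) (y : Fin T → ℝ) (t : Fin T) : ℝ :=
  if t.val = 0 then ym1
  else if t.val = 1 then y0
  else y ⟨t.val - 2, lt_of_le_of_lt (Nat.sub_le _ _) t.isLt⟩

/-- The AR(2) logit probability with general fixed effects:
`P(y|A) = ∏_t exp(y_t (γ₁ y_{t-1} + γ₂ y_{t-2} + w_tᵀA)) /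
(1 + exp(γ₁ y_{t-1} + γ₂ y_{t-2} + w_tᵀA))`. -/
noncomputable def ar2PW {T dw : ℕ} (γ1 γ2 : ℝ) (w : Fin T → Fin dw → ℝ)
    (ym1 y0 : ℝ) (A : Fin dw → ℝ) (y : Fin T → ℝ) : ℝ :=
  ∏ t, Real.exp (y t * (γ1 * lag1 y0 y t + γ2 * lag2 ym1 y0 y t + ∑ k, w t k * A k)) /
      (1 + Real.exp (γ1 * lag1 y0 y t + γ2 * lag2 ym1 y0 y t + ∑ k, w t k * A k))

lemma lag2_eq_lag1_lag1 {T : ℕ} (ym1 y0 : ℝ) (y : Fin T → ℝ) (t : Fin T) :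
    lag2 ym1 y0 y t = lag1 ym1 (lag1 y0 y) t := by
  unfold lag2 lag1
  by_cases h0 : t.val = 0
  · simp [h0]
  · by_cases h1 : t.val = 1
    · simp [h1]
    · have h : t.val - 1 ≠ 0 := by omega
      simp only [h0, h1, h, if_false]
      rfl

lemma lag1_eq_zero_or_one {T : ℕ} {c : ℝ} {u : Fin T → ℝ} (hc : c = 0 ∨ c = 1)
    (hu : ∀ t, u t = 0 ∨ u t = 1) (t : Fin T) : lag1 c u t = 0 ∨ lag1 c u t = 1 := by
  unfold lag1
  split_ifs
  exacts [hc, hu _]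

lemma lag1_mul {T : ℕ} (c d : ℝ) (u v : Fin T → ℝ) (t : Fin T) :
    lag1 (c * d) (fun s => u s * v s) t = lag1 c u t * lag1 d v t := by
  unfold lag1
  split_ifs <;> rfl

/-- Lagging a sequence trades its last term for the initial value in its sum. -/
lemma sum_lag1_add_last {n : ℕ} (c : ℝ) (u : Fin (n + 1) → ℝ) :
    ∑ t, lag1 c u t + u (Fin.last n) = c + ∑ t, u t := by
  rw [Fin.sum_univ_succ, Fin.sum_univ_castSucc (f := u)]
  have h0 : lag1 c u 0 = c := by simp [lag1]
  have hs : ∀ i : Fin n, lag1 c u i.succ = u i.castSucc := fun i => by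
    simp only [lag1, Fin.val_succ, Nat.succ_ne_zero, if_false, Nat.add_sub_cancel]
    rfl
  simp only [h0, hs]
  ring

lemma sum_lag1_add_last_mul {n : ℕ} (ym1 y0 : ℝ) (y : Fin (n + 1) → ℝ) :
    ∑ t, lag1 y0 y t * lag2 ym1 y0 y t + y (Fin.last n) * lag1 y0 y (Fin.last n) =
      y0 * ym1 + ∑ t, y t * lag1 y0 y t := by
  rw [← sum_lag1_add_last (y0 * ym1) fun t => y t * lag1 y0 y t]
  simp only [lag1_mul, lag2_eq_lag1_lag1]

/-- Equality of the group sums of `f` and `g` is equality of all group-weighted sums. -/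
lemma sum_mul_comp_eq {T dw : ℕ} {w : Fin T → Fin dw → ℝ} {j : Fin T → Fin dw}
    (hj : ∀ t, w t = Pi.single (j t) 1) {f g : Fin T → ℝ}
    (h : ∀ k, ∑ t, w t k * f t = ∑ t, w t k * g t) (B : Fin dw → ℝ) :
    ∑ t, f t * B (j t) = ∑ t, g t * B (j t) := by
  have key : ∀ f : Fin T → ℝ, ∑ t, f t * B (j t) = ∑ k, B k * ∑ t, w t k * f t := fun f => by
    simp_rw [Finset.mul_sum]
    rw [Finset.sum_comm]
    refine Finset.sum_congr rfl fun t _ => ?_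
    simp [hj, Pi.single_apply, mul_comm]
  rw [key, key]
  simp only [h]

lemma sum_eq_of_group_sums_eq {T dw : ℕ} {w : Fin T → Fin dw → ℝ} {j : Fin T → Fin dw}
    (hj : ∀ t, w t = Pi.single (j t) 1) {f g : Fin T → ℝ}
    (h : ∀ k, ∑ t, w t k * f t = ∑ t, w t k * g t) : ∑ t, f t = ∑ t, g t := by
  simpa using sum_mul_comp_eq hj h fun _ => 1

/-- A function of two binary variables is a polynomial in them. -/
lemma binary_interpolation (F : ℝ → ℝ → ℝ) {a b : ℝ} (ha : a = 0 ∨ a = 1) (hb : b = 0 ∨ b = 1) :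
    F a b = F 0 0 + a * (F 1 0 - F 0 0) + b * (F 0 1 - F 0 0) +
      a * b * (F 1 1 - F 1 0 - F 0 1 + F 0 0) := by
  rcases ha with rfl | rfl <;> rcases hb with rfl | rfl <;> ring

lemma sum_binary_eq {T dw : ℕ} {w : Fin T → Fin dw → ℝ} {j : Fin T → Fin dw}
    (hj : ∀ t, w t = Pi.single (j t) 1) (F : Fin dw → ℝ → ℝ → ℝ) {a b a' b' : Fin T → ℝ}
    (ha : ∀ t, a t = 0 ∨ a t = 1) (hb : ∀ t, b t = 0 ∨ b t = 1)
    (ha' : ∀ t, a' t = 0 ∨ a' t = 1) (hb' : ∀ t, b' t = 0 ∨ b' t = 1)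
    (h : ∀ k, ∑ t, w t k * a t = ∑ t, w t k * a' t)
    (h' : ∀ k, ∑ t, w t k * b t = ∑ t, w t k * b' t)
    (hm : ∀ k, ∑ t, w t k * (a t * b t) = ∑ t, w t k * (a' t * b' t)) :
    ∑ t, F (j t) (a t) (b t) = ∑ t, F (j t) (a' t) (b' t) := by
  rw [Finset.sum_congr rfl fun t _ => binary_interpolation (F (j t)) (ha t) (hb t),
    Finset.sum_congr rfl fun t _ => binary_interpolation (F (j t)) (ha' t) (hb' t)]
  simp only [Finset.sum_add_distrib]
  rw [sum_mul_comp_eq hj h fun k => F k 1 0 - F k 0 0,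
    sum_mul_comp_eq hj h' fun k => F k 0 1 - F k 0 0,
    sum_mul_comp_eq hj hm fun k => F k 1 1 - F k 1 0 - F k 0 1 + F k 0 0]

lemma ar2PW_eq_exp {T dw : ℕ} (γ1 γ2 : ℝ) {w : Fin T → Fin dw → ℝ} {j : Fin T → Fin dw}
    (hj : ∀ t, w t = Pi.single (j t) 1) (ym1 y0 : ℝ) (A : Fin dw → ℝ) (y : Fin T → ℝ) :
    ar2PW γ1 γ2 w ym1 y0 A y =
      Real.exp (γ1 * ∑ t, y t * lag1 y0 y t + γ2 * ∑ t, y t * lag2 ym1 y0 y t +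
        ∑ t, y t * A (j t) -
        ∑ t, Real.log (1 + Real.exp (γ1 * lag1 y0 y t + γ2 * lag2 ym1 y0 y t + A (j t)))) := by
  have hA : ∀ t, ∑ k, w t k * A k = A (j t) := fun t => by simp [hj, Pi.single_apply]
  rw [Finset.mul_sum, Finset.mul_sum, ← Finset.sum_add_distrib, ← Finset.sum_add_distrib,
    ← Finset.sum_sub_distrib, Real.exp_sum, ar2PW]
  refine Finset.prod_congr rfl fun t _ => ?_
  rw [Real.exp_sub, Real.exp_log (by positivity), hA]
  congr 2
  ring

/-- In the AR(2) logit model with standard-basis weight vectors,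
fixed initial values `y₋₁, y₀ ∈ {0,1}` and `T ≥ 2`, if `y, y'` satisfy the four
conditions `Σ_t w_t y_t = Σ_t w_t y'_t`, `Σ_t w_t y_{t-1} = Σ_t w_t y'_{t-1}`,
`Σ_t w_t y_{t-2} = Σ_t w_t y'_{t-2}` and
`Σ_t w_t y_{t-1} y_{t-2} = Σ_t w_t y'_{t-1} y'_{t-2}`, then:
(a) `y_{T-1} = y'_{T-1}` and `y_T = y'_T`;
(b) `Σ_t y_t y_{t-1} = Σ_t y'_t y'_{t-1}`; and
(c) for every `A`, `P(y|A)/P(y'|A) = exp(γ₂ Σ_t (y_t y_{t-2} - y'_t y'_{t-2}))`,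
which depends neither on `A` nor on `γ₁`. -/
theorem stmt15 {T dw : ℕ} (hT : 2 ≤ T) (hdw : 1 ≤ dw)
    (γ1 γ2 : ℝ) (w : Fin T → Fin dw → ℝ)
    (hw : ∀ t, ∃ j : Fin dw, w t = Pi.single j 1)
    (ym1 y0 : ℝ) (hym1 : ym1 = 0 ∨ ym1 = 1) (hy0 : y0 = 0 ∨ y0 = 1)
    (y y' : Fin T → ℝ)
    (hy : ∀ t, y t = 0 ∨ y t = 1) (hy' : ∀ t, y' t = 0 ∨ y' t = 1)
    (h1 : ∀ k, ∑ t, w t k * y t = ∑ t, w t k * y' t)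
    (h2 : ∀ k, ∑ t, w t k * lag1 y0 y t = ∑ t, w t k * lag1 y0 y' t)
    (h3 : ∀ k, ∑ t, w t k * lag2 ym1 y0 y t = ∑ t, w t k * lag2 ym1 y0 y' t)
    (h4 : ∀ k, ∑ t, w t k * (lag1 y0 y t * lag2 ym1 y0 y t) =
      ∑ t, w t k * (lag1 y0 y' t * lag2 ym1 y0 y' t)) :
    (y ⟨T - 2, by omega⟩ = y' ⟨T - 2, by omega⟩ ∧
      y ⟨T - 1, by omega⟩ = y' ⟨T - 1, by omega⟩) ∧
    (∑ t, y t * lag1 y0 y t = ∑ t, y' t * lag1 y0 y' t) ∧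
    (∀ A : Fin dw → ℝ,
      ar2PW γ1 γ2 w ym1 y0 A y / ar2PW γ1 γ2 w ym1 y0 A y' =
        Real.exp (γ2 * ∑ t, (y t * lag2 ym1 y0 y t - y' t * lag2 ym1 y0 y' t))) := by
  choose j hj using hw
  obtain ⟨n, rfl⟩ : ∃ n, T = n + 2 := ⟨T - 2, by omega⟩
  have hl1 := lag1_eq_zero_or_one hy0 hy
  have hl1' := lag1_eq_zero_or_one hy0 hy'
  have hl2 : ∀ t, lag2 ym1 y0 y t = 0 ∨ lag2 ym1 y0 y t = 1 := fun t => by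
    rw [lag2_eq_lag1_lag1]
    exact lag1_eq_zero_or_one hym1 hl1 t
  have hl2' : ∀ t, lag2 ym1 y0 y' t = 0 ∨ lag2 ym1 y0 y' t = 1 := fun t => by
    rw [lag2_eq_lag1_lag1]
    exact lag1_eq_zero_or_one hym1 hl1' t
  have s1 := sum_eq_of_group_sums_eq hj h1
  have s2 := sum_eq_of_group_sums_eq hj h2
  have s3 := sum_eq_of_group_sums_eq hj h3
  have s4 := sum_eq_of_group_sums_eq hj h4
  simp only [lag2_eq_lag1_lag1] at s3
  have hlast : y (Fin.last (n + 1)) = y' (Fin.last (n + 1)) := by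
    linarith [sum_lag1_add_last y0 y, sum_lag1_add_last y0 y']
  have hprev : lag1 y0 y (Fin.last (n + 1)) = lag1 y0 y' (Fin.last (n + 1)) := by
    linarith [sum_lag1_add_last ym1 (lag1 y0 y), sum_lag1_add_last ym1 (lag1 y0 y')]
  have hb : ∑ t, y t * lag1 y0 y t = ∑ t, y' t * lag1 y0 y' t := by
    have e := sum_lag1_add_last_mul ym1 y0 y
    rw [hlast, hprev, s4, sum_lag1_add_last_mul] at e
    linarith
  refine ⟨⟨?_, hlast⟩, hb, fun A => ?_⟩
  · simpa [lag1] using hprev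
  · rw [ar2PW_eq_exp γ1 γ2 hj, ar2PW_eq_exp γ1 γ2 hj, ← Real.exp_sub, hb,
      sum_mul_comp_eq hj h1 A, Finset.sum_sub_distrib,
      sum_binary_eq hj (fun k a b => Real.log (1 + Real.exp (γ1 * a + γ2 * b + A k)))
        hl1 hl2 hl1' hl2' h2 h3 h4]
    ring_nf
end

section
/- Consider the AR(1) logit model with covariates and general fixed effects: fix γ ∈ ℝ, β ∈ ℝ^{d_x}, and weight vectors w_1,…,w_T ∈ ℝ^{d_w} each of which is a standard basis vector; for y_0 ∈ {0,1}, covariates x = (x_1,…,x_T) ∈ (ℝ^{d_x})^T, y ∈ {0,1}^T and A ∈ ℝ^{d_w}, define P(y | y_0, x, A) := ∏_{t=1}^T exp(y_t (γ y_{t−1} + x_tᵀβ + w_tᵀA)) / (1 + exp(γ y_{t−1} + x_tᵀβ + w_tᵀA)). Then: (a) for all y, y_0, x, A, P(y | y_0, x, A) = P(𝟙 − y | 1 − y_0, −x, −A − γ𝟙_{d_w}), where 𝟙 − y denotes the componentwise complement, −x = (−x_1,…,−x_T), and 𝟙_{d_w} is the all-ones vector in ℝ^{d_w}; and (b) consequently,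 if a function m(y, y_0, x) satisfies Σ_{y ∈ {0,1}^T} m(y, y_0, x) P(y | y_0, x, A) = 0 for all y_0 ∈ {0,1}, all x ∈ (ℝ^{d_x})^T, and all A ∈ ℝ^{d_w}, then the function m̃(y, y_0, x) := m(𝟙 − y, 1 − y_0, −x) also satisfies Σ_{y ∈ {0,1}^T} m̃(y, y_0, x) P(y | y_0, x, A) = 0 for all y_0, x, A. -/
/-- The lagged outcome `y_{t-1}` (with fixed initial value `y₀` at `t = 1`),
0-indexed in `t`. -/
def blag {T : ℕ} (y0 : Bool) (y : Fin T → Bool) (t : Fin T) : Bool :=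
  if t.val = 0 then y0
  else y ⟨t.val - 1, lt_of_le_of_lt (Nat.sub_le _ _) t.isLt⟩

/-- The AR(1) logit probability with covariates and general fixed effects:
`P(y | y₀, x, A) = ∏_t exp(y_t (γ y_{t-1} + x_tᵀβ + w_tᵀA)) /
(1 + exp(γ y_{t-1} + x_tᵀβ + w_tᵀA))`. -/
noncomputable def ar1PX {T dw dx : ℕ} (γ : ℝ) (β : Fin dx → ℝ)
    (w : Fin T → Fin dw → ℝ) (y0 : Bool) (x : Fin T → Fin dx → ℝ)
    (A : Fin dw → ℝ) (y : Fin T → Bool) : ℝ :=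
  ∏ t, Real.exp (b2r (y t) *
        (γ * b2r (blag y0 y t) + (∑ i, x t i * β i) + ∑ k, w t k * A k)) /
      (1 + Real.exp (γ * b2r (blag y0 y t) + (∑ i, x t i * β i) + ∑ k, w t k * A k))

theorem b2r_not (b : Bool) : b2r (!b) = 1 - b2r b := by
  cases b <;> simp [b2r]

theorem blag_not {T : ℕ} (y0 : Bool) (y : Fin T → Bool) (t : Fin T) :
    blag (!y0) (fun s => !(y s)) t = !(blag y0 y t) := by
  unfold blag
  split_ifs <;> rfl

/-- The logistic probability of an outcome is that of the complementary outcome at the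
negated index. -/
theorem logit_not (b : Bool) (z : ℝ) :
    Real.exp (b2r (!b) * -z) / (1 + Real.exp (-z)) =
      Real.exp (b2r b * z) / (1 + Real.exp z) := by
  have hz := Real.exp_pos z
  cases b <;> simp only [b2r, Real.exp_neg, Bool.not_true, Bool.not_false, if_true, if_false,
    Bool.false_eq_true, one_mul, zero_mul, Real.exp_zero] <;> field_simp <;> ring

theorem ar1PX_not {T dw dx : ℕ} (γ : ℝ) (β : Fin dx → ℝ) (w : Fin T → Fin dw → ℝ)
    (hw : ∀ t, ∑ k, w t k = 1) (y0 : Bool) (x : Fin T → Fin dx → ℝ) (A : Fin dw → ℝ)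
    (y : Fin T → Bool) :
    ar1PX γ β w (!y0) (fun t i => -(x t i)) (fun k => -(A k) - γ) (fun t => !(y t)) =
      ar1PX γ β w y0 x A y := by
  unfold ar1PX
  refine Finset.prod_congr rfl fun t _ => ?_
  have hindex : γ * b2r (blag (!y0) (fun s => !(y s)) t) + (∑ i, -(x t i) * β i) +
      ∑ k, w t k * (-(A k) - γ) =
      -(γ * b2r (blag y0 y t) + (∑ i, x t i * β i) + ∑ k, w t k * A k) := by
    rw [blag_not, b2r_not]
    simp only [mul_sub, mul_neg, neg_mul, Finset.sum_sub_distrib, Finset.sum_neg_distrib,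
      ← Finset.sum_mul, hw t]
    ring
  rw [hindex, logit_not]

/-- In the AR(1) logit model with covariates and standard-basis
weight vectors: (a) `P(y | y₀, x, A) = P(𝟙 - y | 1 - y₀, -x, -A - γ𝟙)` for all
`y, y₀, x, A`; and (b) consequently, if `m(y, y₀, x)` is a fixed-effect-free moment
function, then so is `m̃(y, y₀, x) := m(𝟙 - y, 1 - y₀, -x)`. -/
theorem stmt16 {T dw dx : ℕ} (hT : 1 ≤ T) (hdw : 1 ≤ dw) (hdx : 1 ≤ dx)
    (γ : ℝ) (β : Fin dx → ℝ) (w : Fin T → Fin dw → ℝ)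
    (hw : ∀ t, ∃ j : Fin dw, w t = Pi.single j 1) :
    (∀ (y : Fin T → Bool) (y0 : Bool) (x : Fin T → Fin dx → ℝ) (A : Fin dw → ℝ),
      ar1PX γ β w y0 x A y =
        ar1PX γ β w (!y0) (fun t i => -(x t i)) (fun k => -(A k) - γ)
          (fun t => !(y t))) ∧
    (∀ m : (Fin T → Bool) → Bool → (Fin T → Fin dx → ℝ) → ℝ,
      (∀ (y0 : Bool) (x : Fin T → Fin dx → ℝ) (A : Fin dw → ℝ),
        ∑ y : Fin T → Bool, m y y0 x * ar1PX γ β w y0 x A y = 0) →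
      (∀ (y0 : Bool) (x : Fin T → Fin dx → ℝ) (A : Fin dw → ℝ),
        ∑ y : Fin T → Bool,
          m (fun t => !(y t)) (!y0) (fun t i => -(x t i)) * ar1PX γ β w y0 x A y = 0)) := by
  have hsum : ∀ t, ∑ k, w t k = 1 := fun t => by
    obtain ⟨j, hj⟩ := hw t
    simp [hj]
  refine ⟨fun y y0 x A => (ar1PX_not γ β w hsum y0 x A y).symm, fun m hm y0 x A => ?_⟩
  have hcompl : Function.Involutive fun (y : Fin T → Bool) t => !(y t) := fun y => by simp
  rw [← hm (!y0) (fun t i => -(x t i)) (fun k => -(A k) - γ)]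
  exact Fintype.sum_equiv hcompl.toPerm _ _ fun y => by
    rw [Function.Involutive.coe_toPerm, ar1PX_not γ β w hsum]
end

section
/- Consider the AR(1) logit panel model with quarterly fixed effects and covariates, with T = 6: fix γ ∈ ℝ, β ∈ ℝ^{d_x}, an initial condition y_0 ∈ {0,1}, covariates x_1,…,x_6 ∈ ℝ^{d_x}, and a fixed effect A = (A_1,A_2,A_3,A_4) ∈ ℝ⁴; let q(t) := ((t−1) mod 4) + 1 (so q(1)=q(5)=1, q(2)=q(6)=2, q(3)=3, q(4)=4), and for y ∈ {0,1}⁶ define P(y | y_0, x, A) := ∏_{t=1}^6 exp(y_t (γ y_{t−1} + x_tᵀβ + A_{q(t)})) / (1 + exp(γ y_{t−1} + x_tᵀβ + A_{q(t)})), with y_0 the fixed initial value. Writing x_{ts} := x_t − x_s, define m₁ : {0,1}⁶ → ℝ by: m₁(y) = exp(γ[(1−y_0)+1] + (x_{51}+x_{26})ᵀβ) if (y₁,y₂,y₄,y₅,y₆) = (1,0,1,0,1); exp(γ(1−y_0) + (x_{51}+x_{26})ᵀβ) if (y₁,y₂,y₄,y₅,y₆) = (1,0,0,0,1); exp(γ(1−y_0)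 + x_{51}ᵀβ) if (y₁,y₂,y₄,y₅,y₆) = (1,0,1,0,0); exp(−γ y_0 + x_{51}ᵀβ) if (y₁,y₂,y₄,y₅,y₆) = (1,0,0,0,0); exp(x_{26}ᵀβ) − 1 if (y₁,y₂,y₅,y₆) = (0,0,0,1); −1 if (y₁,y₂,y₅) = (0,0,1); exp(−γ y_0 + (x_{51}+x_{62})ᵀβ) if (y₁,y₂,y₄,y₅,y₆) = (1,1,1,0,0); exp(−γ(1+y_0) + (x_{51}+x_{62})ᵀβ) if (y₁,y₂,y₄,y₅,y₆) = (1,1,0,0,0); exp(γ(1−y_0) + x_{51}ᵀβ) if (y₁,y₂,y₄,y₅,y₆) = (1,1,1,0,1); exp(−γ y_0 + x_{51}ᵀβ) if (y₁,y₂,y₄,y₅,y₆) = (1,1,0,0,1); exp(x_{62}ᵀβ) − 1 if (y₁,y₂,y₅,y₆) = (0,1,0,0); −1 if (y₁,y₂,y₅) = (0,1,1); and 0 otherwise (the value of y₃, and of y₄ in the cases where it is unrestricted, is arbitrary). Then for every A ∈ ℝ⁴, Σ_{y ∈ {0,1}⁶} m₁(y) · P(y | y_0, x, A) = 0. -/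
/-- The quarter of period `t` (0-indexed periods `0,…,5` and quarters `0,…,3`,
matching `q(t) = ((t-1) mod 4) + 1` in 1-indexed form). -/
def quarter (t : Fin 6) : Fin 4 := ⟨t.val % 4, Nat.mod_lt _ (by norm_num)⟩

/-- The AR(1) logit probability with quarterly fixed effects and covariates, `T = 6`:
`P(y | y₀, x, A) = ∏_{t=1}^6 exp(y_t (γ y_{t-1} + x_tᵀβ + A_{q(t)})) /
(1 + exp(γ y_{t-1} + x_tᵀβ + A_{q(t)}))`. -/
noncomputable def Pquart {dx : ℕ} (γ : ℝ) (β : Fin dx → ℝ) (y0 : Bool)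
    (x : Fin 6 → Fin dx → ℝ) (A : Fin 4 → ℝ) (y : Fin 6 → Bool) : ℝ :=
  ∏ t, Real.exp (b2r (y t) *
        (γ * b2r (blag y0 y t) + (∑ i, x t i * β i) + A (quarter t))) /
      (1 + Real.exp (γ * b2r (blag y0 y t) + (∑ i, x t i * β i) + A (quarter t)))

/-- The moment function `m₁` (1-indexed `y₁,…,y₆` correspond to `y 0,…,y 5`; the
listed cases are mutually exclusive and `m₁` vanishes otherwise). -/
noncomputable def m1quart {dx : ℕ} (γ : ℝ) (β : Fin dx → ℝ) (y0 : Bool)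
    (x : Fin 6 → Fin dx → ℝ) (y : Fin 6 → Bool) : ℝ :=
  let b0 : ℝ := b2r y0
  let d51 : ℝ := ∑ i, (x 4 i - x 0 i) * β i
  let d26 : ℝ := ∑ i, (x 1 i - x 5 i) * β i
  let d62 : ℝ := ∑ i, (x 5 i - x 1 i) * β i
  if y 0 = true ∧ y 1 = false ∧ y 3 = true ∧ y 4 = false ∧ y 5 = true then
    Real.exp (γ * ((1 - b0) + 1) + (d51 + d26))
  else if y 0 = true ∧ y 1 = false ∧ y 3 = false ∧ y 4 = false ∧ y 5 = true then
    Real.exp (γ * (1 - b0) + (d51 + d26))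
  else if y 0 = true ∧ y 1 = false ∧ y 3 = true ∧ y 4 = false ∧ y 5 = false then
    Real.exp (γ * (1 - b0) + d51)
  else if y 0 = true ∧ y 1 = false ∧ y 3 = false ∧ y 4 = false ∧ y 5 = false then
    Real.exp (-(γ * b0) + d51)
  else if y 0 = false ∧ y 1 = false ∧ y 4 = false ∧ y 5 = true then
    Real.exp d26 - 1
  else if y 0 = false ∧ y 1 = false ∧ y 4 = true then -1
  else if y 0 = true ∧ y 1 = true ∧ y 3 = true ∧ y 4 = false ∧ y 5 = false then
    Real.exp (-(γ * b0) + (d51 + d62))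
  else if y 0 = true ∧ y 1 = true ∧ y 3 = false ∧ y 4 = false ∧ y 5 = false then
    Real.exp (-(γ * (1 + b0)) + (d51 + d62))
  else if y 0 = true ∧ y 1 = true ∧ y 3 = true ∧ y 4 = false ∧ y 5 = true then
    Real.exp (γ * (1 - b0) + d51)
  else if y 0 = true ∧ y 1 = true ∧ y 3 = false ∧ y 4 = false ∧ y 5 = true then
    Real.exp (-(γ * b0) + d51)
  else if y 0 = false ∧ y 1 = true ∧ y 4 = false ∧ y 5 = false then
    Real.exp d62 - 1
  else if y 0 = false ∧ y 1 = true ∧ y 4 = true then -1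
  else 0

/-- The logit probability of the outcome `b` at index `z`. -/
noncomputable def logitProb (b : Bool) (z : ℝ) : ℝ :=
  Real.exp (b2r b * z) / (1 + Real.exp z)

theorem logitProb_true (z : ℝ) : logitProb true z = Real.exp z / (1 + Real.exp z) := by
  simp [logitProb, b2r]

theorem logitProb_false (z : ℝ) : logitProb false z = 1 / (1 + Real.exp z) := by
  simp [logitProb, b2r]

theorem logitProb_true_add_false (z : ℝ) : logitProb true z + logitProb false z = 1 := by
  have : 1 + Real.exp z ≠ 0 := by positivity
  rw [logitProb_true, logitProb_false]
  field_simp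
  ring

theorem sum_fin_succ_bool {n : ℕ} (f : (Fin (n + 1) → Bool) → ℝ) :
    ∑ y, f y = ∑ a, ∑ y : Fin n → Bool, f (Matrix.vecCons a y) := by
  rw [← (Fin.consEquiv fun _ : Fin (n + 1) => Bool).sum_comp, Fintype.sum_prod_type]
  rfl

theorem sum_fin_six_bool (f : (Fin 6 → Bool) → ℝ) :
    ∑ y, f y = ∑ a, ∑ b, ∑ c, ∑ d, ∑ e, ∑ k, f ![a, b, c, d, e, k] := by
  simp only [sum_fin_succ_bool, Fintype.sum_unique]
  rfl

theorem Pquart_vec {dx : ℕ} (γ : ℝ) (β : Fin dx → ℝ) (y0 : Bool)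
    (x : Fin 6 → Fin dx → ℝ) (A : Fin 4 → ℝ) (a b c d e k : Bool) :
    Pquart γ β y0 x A ![a, b, c, d, e, k] =
      logitProb a (γ * b2r y0 + (∑ i, x 0 i * β i) + A 0) *
      logitProb b (γ * b2r a + (∑ i, x 1 i * β i) + A 1) *
      logitProb c (γ * b2r b + (∑ i, x 2 i * β i) + A 2) *
      logitProb d (γ * b2r c + (∑ i, x 3 i * β i) + A 3) *
      logitProb e (γ * b2r d + (∑ i, x 4 i * β i) + A 0) *
      logitProb k (γ * b2r e + (∑ i, x 5 i * β i) + A 1) := by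
  rw [Pquart, Fin.prod_univ_six]
  rfl

/-- Given the outcomes of periods two to four, the sum over the remaining periods depends on them
only through the transition probabilities and, up to sign, the second outcome. -/
theorem sum_m1quart_mul_Pquart_of_middle {dx : ℕ} (γ : ℝ) (β : Fin dx → ℝ) (y0 : Bool)
    (x : Fin 6 → Fin dx → ℝ) (A : Fin 4 → ℝ) (b c d : Bool) :
    ∑ a, ∑ e, ∑ k, m1quart γ β y0 x ![a, b, c, d, e, k] *
        Pquart γ β y0 x A ![a, b, c, d, e, k] =
      logitProb false (γ * b2r y0 + (∑ i, x 0 i * β i) + A 0) *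
      (logitProb b ((∑ i, x 5 i * β i) + A 1) - logitProb b ((∑ i, x 1 i * β i) + A 1)) *
      logitProb c (γ * b2r b + (∑ i, x 2 i * β i) + A 2) *
      logitProb d (γ * b2r c + (∑ i, x 3 i * β i) + A 3) := by
  simp only [Pquart_vec]
  generalize logitProb c _ = r
  generalize logitProb d _ = s
  have diff (t u : Fin 6) : ∑ i, (x t i - x u i) * β i =
      (∑ i, x t i * β i) - ∑ i, x u i * β i := by
    simp only [sub_mul, Finset.sum_sub_distrib]
  simp only [m1quart, diff]
  generalize (∑ i, x 0 i * β i) = v0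
  generalize (∑ i, x 1 i * β i) = v1
  generalize (∑ i, x 4 i * β i) = v4
  generalize (∑ i, x 5 i * β i) = v5
  generalize A 0 = A0
  generalize A 1 = A1
  cases y0 <;> cases b <;> cases d <;>
  · simp [b2r, logitProb_true, logitProb_false, Real.exp_add, Real.exp_sub, Real.exp_neg, mul_add]
    have := Real.exp_pos γ
    have := Real.exp_pos v0
    have := Real.exp_pos v1
    have := Real.exp_pos v4
    have := Real.exp_pos v5
    have := Real.exp_pos A0
    have := Real.exp_pos A1
    generalize Real.exp γ = g at *
    generalize Real.exp v0 = u0 at *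
    generalize Real.exp v1 = u1 at *
    generalize Real.exp v4 = u4 at *
    generalize Real.exp v5 = u5 at *
    generalize Real.exp A0 = a0 at *
    generalize Real.exp A1 = a1 at *
    field_simp
    ring

/-- In the AR(1) logit panel model with quarterly fixed effects,
covariates and `T = 6`, the function `m₁` is a valid fixed-effect-free moment
function: `Σ_{y ∈ {0,1}⁶} m₁(y) P(y | y₀, x, A) = 0` for every `A ∈ ℝ⁴`. -/
theorem stmt17 {dx : ℕ} (hdx : 1 ≤ dx) (γ : ℝ) (β : Fin dx → ℝ) (y0 : Bool)
    (x : Fin 6 → Fin dx → ℝ) :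
    ∀ A : Fin 4 → ℝ,
      ∑ y : Fin 6 → Bool, m1quart γ β y0 x y * Pquart γ β y0 x A y = 0 := by
  intro A
  have reorder (f : Bool → Bool → Bool → Bool → ℝ) :
      ∑ a, ∑ b, ∑ c, ∑ d, f a b c d = ∑ b, ∑ c, ∑ d, ∑ a, f a b c d := by
    simp only [Fintype.sum_bool]
    ring
  have total (z : ℝ) : ∑ b, logitProb b z = 1 := by
    rw [Fintype.sum_bool, logitProb_true_add_false]
  rw [sum_fin_six_bool, reorder]
  simp only [sum_m1quart_mul_Pquart_of_middle, ← Finset.mul_sum, total, mul_one,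
    Finset.sum_sub_distrib, sub_self, mul_zero]
end
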